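/- Let X be a closed interval (a space homeomorphic to [0,1]) and let f : X → X be a continuous map with zero topological entropy. Then h_∞(f|_{ω(f)}) = h_∞(f|_{Ω(f)}) = h_∞(f|_{CR(f)}) = 0. -/

import Mathlib

open Set Filter Topology Function
open scoped ENNReal

/-- A subset of a topological space is an *arc* if it is homeomorphic to `[0,1]`. -/
def IsArc {X : Type*} [TopologicalSpace X] (A : Set X) : Prop :=
  Nonempty (A ≃ₜ Set.Icc (0 : ℝ) 1)

/-- A point `p` is an *endpoint* of the arc `A` if `p ∈ A` and `A \ {p}` is connected. -/
def IsArcEndpoint {X : Type*} [TopologicalSpace X] (A : Set X) (p : X) : Prop :=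
  p ∈ A ∧ IsConnected (A \ {p})

/-- A subset is a *simple closed curve* if it is homeomorphic to the unit circle. -/
def IsSimpleClosedCurve {X : Type*} [TopologicalSpace X] (S : Set X) : Prop :=
  Nonempty (S ≃ₜ Metric.sphere (0 : ℂ) 1)

/-- A *tree* is a compact connected metric space which is a union of finitely many arcs,
any two of which are disjoint or intersect only in (one or both of) their endpoints,
and which contains no simple closed curve. -/
def IsTree (X : Type*) [MetricSpace X] : Prop :=
  CompactSpace X ∧ ConnectedSpace X ∧
    (∃ 𝒜 : Finset (Set X), (∀ A ∈ 𝒜, IsArc A) ∧ ⋃₀ (𝒜 : Set (Set X)) = Set.univ ∧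
      ∀ A ∈ 𝒜, ∀ B ∈ 𝒜, A ≠ B → ∀ p ∈ A ∩ B, IsArcEndpoint A p ∧ IsArcEndpoint B p) ∧
    ∀ S : Set X, ¬ IsSimpleClosedCurve S

/-- A *dendrite* is a locally connected continuum containing no simple closed curve. -/
def IsDendrite (X : Type*) [MetricSpace X] : Prop :=
  CompactSpace X ∧ ConnectedSpace X ∧ LocallyConnectedSpace X ∧
    ∀ S : Set X, ¬ IsSimpleClosedCurve S

/-- `𝒰` is a finite open cover of the subset `Y`. -/
def IsOpenCoverOn {X : Type*} [TopologicalSpace X] (Y : Set X) (𝒰 : Finset (Set X)) : Prop :=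
  (∀ U ∈ 𝒰, IsOpen U) ∧ Y ⊆ ⋃₀ (𝒰 : Set (Set X))

/-- `N(⋁_{i=1}^n f^{-a_i}(𝒰))`, relative to the subset `Y`: the minimal number `m` of elements
of the join cover `⋁_{i=1}^n f^{-a_i}(𝒰)` needed to cover `Y`. -/
noncomputable def seqCoverCountOn {X : Type*} (f : X → X) (Y : Set X) (a : ℕ → ℕ)
    (𝒰 : Finset (Set X)) (n : ℕ) : ℕ :=
  sInf { m | ∃ c : Fin m → Fin n → Set X, (∀ j i, c j i ∈ 𝒰) ∧
    Y ⊆ ⋃ j, ⋂ i, f^[a i.1] ⁻¹' c j i }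

/-- Topological sequence entropy of `f` restricted to the (invariant) subset `Y`,
with respect to the sequence `a`. -/
noncomputable def seqEntropyOn {X : Type*} [TopologicalSpace X] (f : X → X) (Y : Set X)
    (a : ℕ → ℕ) : ℝ≥0∞ :=
  ⨆ (𝒰 : Finset (Set X)) (_ : IsOpenCoverOn Y 𝒰),
    Filter.limsup
      (fun n : ℕ => ENNReal.ofReal (Real.log (seqCoverCountOn f Y a 𝒰 n) / n)) Filter.atTop

/-- Topological sequence entropy of `f : X → X` with respect to the sequence `a`. -/
noncomputable def seqEntropy {X : Type*} [TopologicalSpace X] (f : X → X) (a : ℕ → ℕ) : ℝ≥0∞ :=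
  seqEntropyOn f Set.univ a

/-- The ordinary topological entropy `h(f)`, i.e. the sequence entropy for `A = (0,1,2,…)`. -/
noncomputable def topEntropy {X : Type*} [TopologicalSpace X] (f : X → X) : ℝ≥0∞ :=
  seqEntropy f id

/-- `h_∞(f|_Y)`: the supremum over all strictly increasing sequences of positive integers of
the topological sequence entropies of `f` restricted to `Y`. -/
noncomputable def supSeqEntropyOn {X : Type*} [TopologicalSpace X] (f : X → X) (Y : Set X) :
    ℝ≥0∞ :=
  ⨆ (a : ℕ → ℕ) (_ : StrictMono a) (_ : 1 ≤ a 0), seqEntropyOn f Y a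

/-- `h_∞(f)`: the supremum of the topological sequence entropies of `f`. -/
noncomputable def supSeqEntropy {X : Type*} [TopologicalSpace X] (f : X → X) : ℝ≥0∞ :=
  supSeqEntropyOn f Set.univ

/-- The ω-limit set `ω_f(x) = ⋂_n closure {f^k(x) : k ≥ n}`. -/
def omegaLimitSet {X : Type*} [TopologicalSpace X] (f : X → X) (x : X) : Set X :=
  ⋂ n : ℕ, closure ((fun k => f^[k] x) '' Set.Ici n)

/-- `ω(f) = ⋃_x ω_f(x)`. -/
def omegaSet {X : Type*} [TopologicalSpace X] (f : X → X) : Set X :=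
  ⋃ x : X, omegaLimitSet f x

/-- The non-wandering set `Ω(f)`. -/
def nonWanderingSet {X : Type*} [TopologicalSpace X] (f : X → X) : Set X :=
  { x | ∀ U : Set X, IsOpen U → x ∈ U → ∃ n, 1 ≤ n ∧ (f^[n] ⁻¹' U ∩ U).Nonempty }

/-- There is an ε-chain from `x` to `y` under `f`. -/
def EpsChain {X : Type*} [MetricSpace X] (f : X → X) (ε : ℝ) (x y : X) : Prop :=
  ∃ n, 1 ≤ n ∧ ∃ c : ℕ → X, c 0 = x ∧ c n = y ∧ ∀ i < n, dist (f (c i)) (c (i + 1)) < ε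

/-- The chain recurrent set `CR(f)`. -/
def chainRecurrentSet {X : Type*} [MetricSpace X] (f : X → X) : Set X :=
  { x | ∀ ε > 0, EpsChain f ε x x }

/-- The chain recurrent set of the restriction `f|_Y`: chain recurrence witnessed by
ε-chains lying entirely inside `Y`. -/
def chainRecurrentSetOn {X : Type*} [MetricSpace X] (f : X → X) (Y : Set X) : Set X :=
  { x ∈ Y | ∀ ε > 0, ∃ n, 1 ≤ n ∧ ∃ c : ℕ → X, c 0 = x ∧ c n = x ∧
      (∀ i ≤ n, c i ∈ Y) ∧ ∀ i < n, dist (f (c i)) (c (i + 1)) < ε }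

/-- `I` is a periodic arc of `f` of period `s`: an arc with `f^s(I) ⊆ I` whose iterates
`I, f(I), …, f^{s-1}(I)` are pairwise disjoint. -/
def IsPeriodicArc {X : Type*} [TopologicalSpace X] (f : X → X) (I : Set X) (s : ℕ) : Prop :=
  IsArc I ∧ 1 ≤ s ∧ Set.MapsTo f^[s] I I ∧
    ∀ i j, i < j → j < s → Disjoint (f^[i] '' I) (f^[j] '' I)

/-- `Orb_f(I) = I ∪ f(I) ∪ … ∪ f^{s-1}(I)`. -/
def arcOrbit {X : Type*} (f : X → X) (I : Set X) (s : ℕ) : Set X :=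
  ⋃ i ∈ Finset.range s, f^[i] '' I

/-- `I` is an independence set for the pair `(U, V)` under `f`. -/
def IsIndepSetPair {X : Type*} (f : X → X) (U V : Set X) (I : Finset ℕ) : Prop :=
  ∀ J ⊆ I, J.Nonempty → ∀ s : ℕ → Bool,
    (⋂ j ∈ J, f^[j] ⁻¹' (if s j then U else V)).Nonempty

/-- `(x, y)` is an IN-pair of `(X, f)`. -/
def INPair {X : Type*} [TopologicalSpace X] (f : X → X) (x y : X) : Prop :=
  ∀ U ∈ nhds x, ∀ V ∈ nhds y, ∀ m : ℕ, ∃ I : Finset ℕ, m ≤ I.card ∧ IsIndepSetPair f U V I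

/-- The set `IN(X, f)` of IN-pairs of `(X, f)`. -/
def INPairs {X : Type*} [TopologicalSpace X] (f : X → X) : Set (X × X) :=
  { p | INPair f p.1 p.2 }

/-- `(x, y)` is an IN-pair of the restricted (sub)system `(Y, f|_Y)`, for `Y` invariant. -/
def INPairOn {X : Type*} [TopologicalSpace X] (f : X → X) (Y : Set X) (x y : X) : Prop :=
  x ∈ Y ∧ y ∈ Y ∧ ∀ U ∈ nhds x, ∀ V ∈ nhds y, ∀ m : ℕ, ∃ I : Finset ℕ, m ≤ I.card ∧
    ∀ J ⊆ I, J.Nonempty → ∀ s : ℕ → Bool,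
      (Y ∩ ⋂ j ∈ J, f^[j] ⁻¹' (if s j then U else V)).Nonempty

/-- `(x, y)` is a Li–Yorke pair for `f`. -/
def LiYorkePair {X : Type*} [MetricSpace X] (f : X → X) (x y : X) : Prop :=
  Filter.liminf (fun n : ℕ => dist (f^[n] x) (f^[n] y)) Filter.atTop = 0 ∧
    0 < Filter.limsup (fun n : ℕ => dist (f^[n] x) (f^[n] y)) Filter.atTop


namespace SeqEnt

/-- horseshoe for some iterate -/
def HS (F : ℝ → ℝ) : Prop :=
  ∃ n : ℕ, 1 ≤ n ∧ ∃ K0 K1 : Set ℝ, IsClosed K0 ∧ IsClosed K1 ∧ Disjoint K0 K1 ∧ K0.Nonempty ∧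
    K0 ∪ K1 ⊆ F^[n] '' K0 ∧ K0 ∪ K1 ⊆ F^[n] '' K1

lemma HS_of_iterate {F : ℝ → ℝ} {m : ℕ} (hm : 1 ≤ m) (h : HS (F^[m])) : HS F := by
  obtain ⟨n, hn, K0, K1, h1, h2, h3, h4, h5, h6⟩ := h
  refine ⟨m * n, Nat.mul_pos hm hn, K0, K1, h1, h2, h3, h4, ?_, ?_⟩
  · rwa [Function.iterate_mul]
  · rwa [Function.iterate_mul]

/-- Intermediate value cover. -/
lemma cov {F : ℝ → ℝ} (hF : Continuous F) {a b s t u v : ℝ} (hs : s ∈ Icc a b) (ht : t ∈ Icc a b)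
    (hu : F s ≤ u) (hv : v ≤ F t) : Icc u v ⊆ F '' Icc a b := by
  intro z hz
  have := isPreconnected_Icc.intermediate_value hs ht (f := F) hF.continuousOn
  exact this ⟨hu.trans hz.1, hz.2.trans hv⟩

lemma cov2 {F : ℝ → ℝ} {A B C : Set ℝ} (h1 : B ⊆ F '' A) (h2 : C ⊆ F '' B) : C ⊆ F^[2] '' A := by
  intro z hz
  obtain ⟨w, hw, rfl⟩ := h2 hz
  obtain ⟨u, hu, rfl⟩ := h1 hw
  exact ⟨u, hu, rfl⟩

lemma cov_iter {F : ℝ → ℝ} {A : Set ℝ} (h : A ⊆ F '' A) (n : ℕ) : A ⊆ F^[n] '' A := by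
  induction n with
  | zero => simp
  | succ n ih =>
    intro z hz
    obtain ⟨w, hw, rfl⟩ := ih hz
    obtain ⟨u, hu, rfl⟩ := h hw
    exact ⟨u, hu, by simp [Function.iterate_succ_apply]⟩

/-- Turbulence with a common point gives a horseshoe. -/
lemma HS_of_turb {G : ℝ → ℝ} (hG : Continuous G) {a m b : ℝ} (hab : a < b) (ham : a ≤ m)
    (hmb : m ≤ b) (h0 : Icc a b ⊆ G '' Icc a m) (h1 : Icc a b ⊆ G '' Icc m b) : HS G := by
  have ham' : a < m := by
    rcases ham.lt_or_eq with h | h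
    · exact h
    · subst h
      obtain ⟨x, hx, hxa⟩ := h0 ⟨le_rfl, hab.le⟩
      obtain ⟨y, hy, hyb⟩ := h0 ⟨hab.le, le_rfl⟩
      have : x = y := by rw [Icc_self] at hx hy; rw [hx, hy]
      subst this
      linarith
  have hmb' : m < b := by
    rcases hmb.lt_or_eq with h | h
    · exact h
    · subst h
      obtain ⟨x, hx, hxa⟩ := h1 ⟨le_rfl, hab.le⟩
      obtain ⟨y, hy, hyb⟩ := h1 ⟨hab.le, le_rfl⟩
      have : x = y := by rw [Icc_self] at hx hy; rw [hx, hy]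
      subst this
      linarith
  -- left piece
  have L : ∃ u r, a ≤ u ∧ u ≤ r ∧ r < m ∧ Icc a b ⊆ G^[2] '' Icc u r := by
    obtain ⟨s, hs, hsa⟩ := h0 ⟨le_rfl, hab.le⟩
    obtain ⟨t, ht, htb⟩ := h0 ⟨hab.le, le_rfl⟩
    rcases le_total s t with hst | hst
    · obtain ⟨r, hr, hrm⟩ := cov hG (left_mem_Icc.2 hst) (right_mem_Icc.2 hst) hsa.le htb.ge ⟨ham, hmb⟩
      refine ⟨s, r, hs.1, hr.1, ?_, ?_⟩
      · rcases hr.2.lt_or_eq with h | h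
        · exact h.trans_le ht.2
        · subst h; linarith
      · exact cov2 (cov hG (left_mem_Icc.2 hr.1) (right_mem_Icc.2 hr.1) hsa.le hrm.ge) h0
    · obtain ⟨r, hr, hrm⟩ := cov hG (right_mem_Icc.2 hst) (left_mem_Icc.2 hst) hsa.le htb.ge ⟨ham, hmb⟩
      refine ⟨t, r, ht.1, hr.1, ?_, ?_⟩
      · rcases hr.2.lt_or_eq with h | h
        · exact h.trans_le hs.2
        · subst h; linarith
      · exact cov2 (cov hG (right_mem_Icc.2 hr.1) (left_mem_Icc.2 hr.1) hrm.le htb.ge) h1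
  have R : ∃ r v, m ≤ r ∧ r ≤ v ∧ v ≤ b ∧ Icc a b ⊆ G^[2] '' Icc r v := by
    obtain ⟨s, hs, hsa⟩ := h1 ⟨le_rfl, hab.le⟩
    obtain ⟨t, ht, htb⟩ := h1 ⟨hab.le, le_rfl⟩
    rcases le_total s t with hst | hst
    · obtain ⟨r, hr, hrm⟩ := cov hG (left_mem_Icc.2 hst) (right_mem_Icc.2 hst) hsa.le htb.ge ⟨ham, hmb⟩
      refine ⟨r, t, hs.1.trans hr.1, hr.2, ht.2, ?_⟩
      exact cov2 (cov hG (left_mem_Icc.2 hr.2) (right_mem_Icc.2 hr.2) hrm.le htb.ge) h1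
    · obtain ⟨r, hr, hrm⟩ := cov hG (right_mem_Icc.2 hst) (left_mem_Icc.2 hst) hsa.le htb.ge ⟨ham, hmb⟩
      refine ⟨r, s, ht.1.trans hr.1, hr.2, hs.2, ?_⟩
      exact cov2 (cov hG (right_mem_Icc.2 hr.2) (left_mem_Icc.2 hr.2) hsa.le hrm.ge) h0
  obtain ⟨u, r, hau, hur, hrm, hL⟩ := L
  obtain ⟨r', v, hmr, hrv, hvb, hR⟩ := R
  have hsub : Icc u r ∪ Icc r' v ⊆ Icc a b := by
    rintro z (hz | hz)
    · exact ⟨hau.trans hz.1, by linarith [hz.2]⟩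
    · exact ⟨by linarith [hz.1], hz.2.trans hvb⟩
  refine ⟨2, by norm_num, Icc u r, Icc r' v, isClosed_Icc, isClosed_Icc, ?_, nonempty_Icc.2 hur,
    hsub.trans hL, hsub.trans hR⟩
  rw [Set.disjoint_left]
  intro z hz hz'
  linarith [hz.2, hz'.1]

/-- A loop and a second return path. -/
lemma HS_of_loop {G : ℝ → ℝ} (hG : Continuous G) {K L : Set ℝ} (hK : IsClosed K) (hL : IsClosed L)
    (hne : K.Nonempty) (hd : Disjoint K L) (h1 : K ⊆ G '' K) (h2 : L ⊆ G '' K) {m : ℕ}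
    (h3 : K ⊆ G^[m] '' L) : HS G := by
  have c0 : K ⊆ G^[m+1] '' (K ∩ G ⁻¹' K) := by
    intro z hz
    obtain ⟨w, hw, rfl⟩ := cov_iter h1 m hz
    obtain ⟨u, hu, rfl⟩ := h1 hw
    exact ⟨u, ⟨hu, hw⟩, by simp [Function.iterate_succ_apply]⟩
  have c1 : K ⊆ G^[m+1] '' (K ∩ G ⁻¹' L) := by
    intro z hz
    obtain ⟨w, hw, rfl⟩ := h3 hz
    obtain ⟨u, hu, rfl⟩ := h2 hw
    exact ⟨u, ⟨hu, hw⟩, by simp [Function.iterate_succ_apply]⟩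
  have hsub : (K ∩ G ⁻¹' K) ∪ (K ∩ G ⁻¹' L) ⊆ K := by
    rintro z (hz | hz) <;> exact hz.1
  refine ⟨m+1, by omega, K ∩ G ⁻¹' K, K ∩ G ⁻¹' L, hK.inter (hK.preimage hG), hK.inter (hL.preimage hG),
    ?_, ?_, hsub.trans c0, hsub.trans c1⟩
  · rw [Set.disjoint_left]
    intro z hz hz'
    exact Set.disjoint_left.1 hd hz.2 hz'.2
  · obtain ⟨z, hz⟩ := hne
    obtain ⟨w, hw, -⟩ := c0 hz
    exact ⟨w, hw⟩

/-- chain recurrence of a point through transitive closures -/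
def CRp {X : Type*} [MetricSpace X] (f : X → X) (x : X) : Prop :=
  ∀ ε > 0, Relation.TransGen (fun u v => dist (f u) v < ε) x x

lemma tg_mono {X : Type*} [MetricSpace X] {f : X → X} {δ ε : ℝ} (h : δ ≤ ε) {x y : X}
    (hxy : Relation.TransGen (fun u v => dist (f u) v < δ) x y) :
    Relation.TransGen (fun u v => dist (f u) v < ε) x y :=
  Relation.TransGen.mono (fun _ _ h' => lt_of_lt_of_le h' h) _ _ hxy

lemma perturb_head {X : Type*} [MetricSpace X] {f : X → X} (hf : UniformContinuous f) {ε : ℝ}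
    (hε : 0 < ε) : ∃ δ > 0, δ ≤ ε ∧ ∀ x u v, dist x u < δ →
      Relation.TransGen (fun u v => dist (f u) v < δ) u v →
      Relation.TransGen (fun u v => dist (f u) v < ε) x v := by
  obtain ⟨δ, hδ, H⟩ := Metric.uniformContinuous_iff.1 hf (ε/2) (by linarith)
  refine ⟨min δ (ε/2), lt_min hδ (by linarith), (min_le_right _ _).trans (by linarith), ?_⟩
  intro x u v hxu huv
  obtain ⟨b, hub, hbv⟩ := Relation.TransGen.head'_iff.1 huv
  refine Relation.TransGen.head' (b := b) ?_ (Relation.ReflTransGen.mono (fun a b h => ?_) _ _ hbv)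
  · have h1 := H (lt_of_lt_of_le hxu (min_le_left _ _))
    have h2 := lt_of_lt_of_le hub (min_le_right _ _)
    have := dist_triangle (f x) (f u) b
    linarith
  · exact lt_of_lt_of_le h ((min_le_right _ _).trans (by linarith))

lemma perturb {X : Type*} [MetricSpace X] {f : X → X} (hf : UniformContinuous f) {ε : ℝ}
    (hε : 0 < ε) : ∃ δ > 0, ∀ x u v y, dist x u < δ → dist v y < δ →
      Relation.TransGen (fun u v => dist (f u) v < δ) u v →
      Relation.TransGen (fun u v => dist (f u) v < ε) x y := by
  obtain ⟨δ, hδ, hδε, H⟩ := perturb_head hf (half_pos hε)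
  refine ⟨δ, hδ, ?_⟩
  intro x u v y hxu hvy huv
  have h1 := H x u v hxu huv
  obtain ⟨b, hxb, hbv⟩ := Relation.TransGen.tail'_iff.1 h1
  refine Relation.TransGen.tail' (b := b) (Relation.ReflTransGen.mono (fun a b h => ?_) _ _ hxb) ?_
  · exact lt_of_lt_of_le h (by linarith)
  · have := dist_triangle (f b) v y
    linarith

lemma CRp_head {X : Type*} [MetricSpace X] {f : X → X} (hf : UniformContinuous f) {x : X}
    (hx : CRp f x) {ε : ℝ} (hε : 0 < ε) : Relation.TransGen (fun u v => dist (f u) v < ε) (f x) x := by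
  obtain ⟨δ, hδ, hδε, H⟩ := perturb_head hf hε
  obtain ⟨b, hxb, hbx⟩ := Relation.TransGen.head'_iff.1 (hx δ hδ)
  exact H (f x) b x hxb (Relation.TransGen.trans_right hbx (hx δ hδ))

lemma CRp_map {X : Type*} [MetricSpace X] {f : X → X} (hf : UniformContinuous f) {x : X}
    (hx : CRp f x) : CRp f (f x) := by
  intro ε hε
  exact (CRp_head hf hx hε).tail (by simpa using hε)

lemma CRp_iter {X : Type*} [MetricSpace X] {f : X → X} (hf : UniformContinuous f) {x : X}
    (hx : CRp f x) (n : ℕ) : CRp f (f^[n] x) := by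
  induction n with
  | zero => exact hx
  | succ n ih => rw [Function.iterate_succ_apply']; exact CRp_map hf ih

lemma CRp_head_iter {X : Type*} [MetricSpace X] {f : X → X} (hf : UniformContinuous f) {x : X}
    (hx : CRp f x) {ε : ℝ} (hε : 0 < ε) (n : ℕ) :
    Relation.TransGen (fun u v => dist (f u) v < ε) (f^[n] x) x := by
  induction n with
  | zero => exact hx ε hε
  | succ n ih =>
    rw [Function.iterate_succ_apply']
    exact (CRp_head hf (CRp_iter hf hx n) hε).trans ih

section parity
variable {α : Type*} {R : α → α → Prop}

lemma shift_R {z y w : α} (h : R z y)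
    (h2 : Relation.ReflTransGen (fun a b => ∃ m, R a m ∧ R m b) y w) :
    ∃ v, Relation.ReflTransGen (fun a b => ∃ m, R a m ∧ R m b) z v ∧ R v w := by
  induction h2 with
  | refl => exact ⟨z, .refl, h⟩
  | tail _ hs ih =>
    obtain ⟨v, hv, hvy⟩ := ih
    obtain ⟨m, hm, hm'⟩ := hs
    exact ⟨m, hv.tail ⟨_, hvy, hm⟩, hm'⟩

lemma parity_cases {x y : α} (h : Relation.TransGen R x y) :
    Relation.TransGen (fun a b => ∃ m, R a m ∧ R m b) x y ∨
    ∃ v, Relation.ReflTransGen (fun a b => ∃ m, R a m ∧ R m b) x v ∧ R v y := by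
  induction h with
  | single h => exact Or.inr ⟨x, .refl, h⟩
  | tail _ hs ih =>
    rcases ih with ih | ⟨v, hv, hvy⟩
    · exact Or.inr ⟨_, ih.to_reflTransGen, hs⟩
    · exact Or.inl (Relation.TransGen.tail' hv ⟨_, hvy, hs⟩)

lemma even_loop {x : α} (h : Relation.TransGen R x x) :
    Relation.TransGen (fun a b => ∃ m, R a m ∧ R m b) x x := by
  rcases parity_cases h with h | ⟨v, hv, hvx⟩
  · exact h
  · obtain ⟨w, hw, hwv⟩ := shift_R hvx hv
    exact Relation.TransGen.tail' (hv.trans hw) ⟨_, hwv, hvx⟩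

end parity

lemma CRp_sq {X : Type*} [MetricSpace X] {f : X → X} (hf : UniformContinuous f) {x : X}
    (hx : CRp f x) : CRp (f^[2]) x := by
  intro ε hε
  obtain ⟨δ, hδ, H⟩ := Metric.uniformContinuous_iff.1 hf (ε/2) (by linarith)
  have := even_loop (hx (min δ (ε/2)) (lt_min hδ (by linarith)))
  refine Relation.TransGen.mono ?_ _ _ this
  rintro a b ⟨m, hm, hm'⟩
  have h1 := H (lt_of_lt_of_le hm (min_le_left _ _))
  have h2 := lt_of_lt_of_le hm' (min_le_right _ _)
  have := dist_triangle (f (f a)) (f m) b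
  show dist (f (f a)) b < ε
  linarith

lemma uc_iter {X : Type*} [MetricSpace X] {f : X → X} (hf : UniformContinuous f) (n : ℕ) :
    UniformContinuous (f^[n]) := by
  induction n with
  | zero => exact uniformContinuous_id
  | succ n ih => rw [Function.iterate_succ]; exact ih.comp hf

lemma CRp_pow {X : Type*} [MetricSpace X] {f : X → X} (hf : UniformContinuous f) {x : X}
    (hx : CRp f x) (k : ℕ) : CRp (f^[2^k]) x := by
  induction k with
  | zero => simpa using hx
  | succ k ih =>
    rw [pow_succ, Function.iterate_mul]
    exact CRp_sq (uc_iter hf _) ih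

lemma chain_eq {X : Type*} [MetricSpace X] {f : X → X} {ε : ℝ} {x y : X} (h : EpsChain f ε x y) :
    Relation.TransGen (fun u v => dist (f u) v < ε) x y := by
  obtain ⟨n, hn, c, h0, h1, hc⟩ := h
  have : ∀ k, k + 1 ≤ n → Relation.TransGen (fun u v => dist (f u) v < ε) (c 0) (c (k+1)) := by
    intro k
    induction k with
    | zero => intro hk; exact .single (hc 0 (by omega))
    | succ k ih => intro hk; exact (ih (by omega)).tail (hc (k+1) (by omega))
  obtain ⟨k, rfl⟩ : ∃ k, n = k + 1 := ⟨n-1, by omega⟩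
  rw [← h0, ← h1]; exact this k le_rfl

lemma eq_chain {X : Type*} [MetricSpace X] {f : X → X} {ε : ℝ} {x y : X}
    (h : Relation.TransGen (fun u v => dist (f u) v < ε) x y) : EpsChain f ε x y := by
  induction h with
  | @single b h => exact ⟨1, le_rfl, fun i => if i = 0 then x else b, by simp, by simp, by
      intro i hi
      obtain rfl : i = 0 := by omega
      simpa using h⟩
  | @tail b d _ hs ih =>
    obtain ⟨n, hn, c, h0, h1, hc⟩ := ih
    refine ⟨n+1, by omega, fun i => if i ≤ n then c i else d, by simp [h0], by simp, ?_⟩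
    intro i hi
    by_cases h : i < n
    · have : i + 1 ≤ n := h
      simpa [h.le, this] using hc i h
    · obtain rfl : i = n := by omega
      simpa [h1] using hs

lemma mem_CR_iff {X : Type*} [MetricSpace X] {f : X → X} {x : X} :
    x ∈ chainRecurrentSet f ↔ CRp f x :=
  ⟨fun h ε hε => chain_eq (h ε hε), fun h ε hε => eq_chain (h ε hε)⟩

end SeqEnt

namespace SeqEnt

lemma trap {F : ℝ → ℝ} (hF : UniformContinuous F) {a b x : ℝ}
    (hm : ∀ z ∈ Icc a b, F z ∈ Ioo a b) (hx : CRp F x) {k : ℕ} (hk : F^[k] x ∈ Icc a b) :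
    x ∈ Ioo a b := by
  have hne : (Icc a b).Nonempty := ⟨_, hk⟩
  obtain ⟨s, hs, hs'⟩ := isCompact_Icc.exists_isMinOn hne hF.continuous.continuousOn
  obtain ⟨t, ht, ht'⟩ := isCompact_Icc.exists_isMaxOn hne hF.continuous.continuousOn
  set ε := min (F s - a) (b - F t) with hε
  have hε0 : 0 < ε := lt_min (by linarith [(hm s hs).1]) (by linarith [(hm t ht).2])
  have key : ∀ u v, u ∈ Icc a b → dist (F u) v < ε → v ∈ Ioo a b := by
    intro u v hu huv
    have h1 : F s ≤ F u := hs' hu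
    have h2 : F u ≤ F t := ht' hu
    have e1 : ε ≤ F s - a := min_le_left _ _
    have e2 : ε ≤ b - F t := min_le_right _ _
    rw [Real.dist_eq, abs_lt] at huv
    constructor <;> linarith [huv.1, huv.2]
  have := CRp_head_iter hF hx hε0 k
  have gen : ∀ v, Relation.TransGen (fun u v => dist (F u) v < ε) (F^[k] x) v → v ∈ Ioo a b := by
    intro v hv
    induction hv with
    | single h => exact key _ _ hk h
    | tail _ h ih => exact key _ _ (Ioo_subset_Icc_self ih) h
  exact gen x this

lemma trap' {F : ℝ → ℝ} (hF : UniformContinuous F) {b x : ℝ} (hxb : x ≤ b)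
    (hm : ∀ z ∈ Icc x b, F z ∈ Ioo x b) (hx : CRp F x) : False := by
  obtain ⟨s, hs, hs'⟩ := isCompact_Icc.exists_isMinOn (nonempty_Icc.2 hxb) hF.continuous.continuousOn
  have h1 := (hm s hs).1
  have hmin : ∀ z ∈ Icc x b, F s ≤ F z := fun z hz => hs' hz
  have := trap hF (a := (x + F s)/2) (b := b) (x := x) (k := 1) ?_ hx ?_
  · linarith [this.1]
  · intro z hz
    have hz' : z ∈ Icc x b := ⟨by linarith [hz.1], hz.2⟩
    exact ⟨by linarith [hmin z hz'], (hm z hz').2⟩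
  · have hz' : x ∈ Icc x b := ⟨le_rfl, hxb⟩
    exact ⟨by simpa using (by linarith [hmin x hz'] : (x + F s)/2 ≤ F x), by simpa using (hm x hz').2.le⟩

lemma right_mover {F : ℝ → ℝ} (hF : UniformContinuous F) {hi : ℝ} (hb : ∀ z, F z ≤ hi)
    (hS : ¬ HS F) {x : ℝ} (hx : CRp F x) (hmv : x < F x) :
    ∃ p, F p = p ∧ x < p ∧ p < F x ∧ F (F x) < p ∧ ∀ q, F q = q → x < q → p ≤ q := by
  have hc := hF.continuous
  have hc2 : Continuous (F^[2]) := hc.iterate 2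
  have noT1 : ∀ a m b : ℝ, a < b → a ≤ m → m ≤ b → Icc a b ⊆ F '' Icc a m →
      Icc a b ⊆ F '' Icc m b → False := fun a m b h1 h2 h3 h4 h5 => hS (HS_of_turb hc h1 h2 h3 h4 h5)
  have noT2 : ∀ a m b : ℝ, a < b → a ≤ m → m ≤ b → Icc a b ⊆ F^[2] '' Icc a m →
      Icc a b ⊆ F^[2] '' Icc m b → False := fun a m b h1 h2 h3 h4 h5 =>
        hS (HS_of_iterate (m := 2) (by norm_num) (HS_of_turb hc2 h1 h2 h3 h4 h5))
  -- the first point y right of x with F y ≤ x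
  have hyne : ({z | x ≤ z ∧ F z ≤ x} : Set ℝ).Nonempty := by
    by_contra hne
    rw [Set.not_nonempty_iff_eq_empty, Set.eq_empty_iff_forall_notMem] at hne
    have hxh : x ≤ hi + 1 := by linarith [hb x]
    refine trap' hF hxh ?_ hx
    intro z hz
    have := hne z
    simp only [Set.mem_setOf_eq, not_and, not_le] at this
    exact ⟨this hz.1, by linarith [hb z]⟩
  have hycl : IsClosed ({z | x ≤ z ∧ F z ≤ x} : Set ℝ) :=
    (isClosed_le continuous_const continuous_id).inter (isClosed_le hc continuous_const)
  have hybd : BddBelow ({z | x ≤ z ∧ F z ≤ x} : Set ℝ) := ⟨x, fun z hz => hz.1⟩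
  obtain ⟨y, hy⟩ : ∃ y, y = sInf {z | x ≤ z ∧ F z ≤ x} := ⟨_, rfl⟩
  have hymem : x ≤ y ∧ F y ≤ x := hy ▸ hycl.csInf_mem hyne hybd
  have hymin : ∀ z, x ≤ z → z < y → x < F z := by
    intro z hz hzy
    by_contra hcon
    have : y ≤ z := hy ▸ csInf_le hybd ⟨hz, not_lt.1 hcon⟩
    linarith
  have hxy : x < y := by
    rcases hymem.1.lt_or_eq with h | h
    · exact h
    · rw [← h] at hymem; linarith [hymem.2]
  -- the first fixed point p
  have hpcl : IsClosed ({z | x ≤ z ∧ F z ≤ z} : Set ℝ) :=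
    (isClosed_le continuous_const continuous_id).inter (isClosed_le hc continuous_id)
  have hpbd : BddBelow ({z | x ≤ z ∧ F z ≤ z} : Set ℝ) := ⟨x, fun z hz => hz.1⟩
  have hpne : ({z | x ≤ z ∧ F z ≤ z} : Set ℝ).Nonempty := ⟨y, hymem.1, hymem.2.trans hymem.1⟩
  obtain ⟨p, hp⟩ : ∃ p, p = sInf {z | x ≤ z ∧ F z ≤ z} := ⟨_, rfl⟩
  have hpmem : x ≤ p ∧ F p ≤ p := hp ▸ hpcl.csInf_mem hpne hpbd
  have hpmin : ∀ z, x ≤ z → z < p → z < F z := by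
    intro z hz hzp
    by_contra hcon
    have : p ≤ z := hp ▸ csInf_le hpbd ⟨hz, not_lt.1 hcon⟩
    linarith
  have hxp : x < p := by
    rcases hpmem.1.lt_or_eq with h | h
    · exact h
    · rw [← h] at hpmem; linarith [hpmem.2]
  have hFp : F p = p := by
    refine le_antisymm hpmem.2 ?_
    have hcl : IsClosed {z | z ≤ F z} := isClosed_le continuous_id hc
    have : p ∈ closure (Ico x p) := by
      rw [closure_Ico hxp.ne]; exact ⟨hxp.le, le_rfl⟩
    exact hcl.closure_subset_iff.2 (fun z hz => (hpmin z hz.1 hz.2).le) this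
  have hpy : p < y := by
    have h1 : p ≤ y := hp ▸ csInf_le hpbd ⟨hymem.1, hymem.2.trans hymem.1⟩
    rcases h1.lt_or_eq with h | h
    · exact h
    · rw [← h] at hymem; linarith [hymem.2]
  -- c
  obtain ⟨c, hcm, hcM⟩ := isCompact_Icc.exists_isMaxOn (nonempty_Icc.2 hxy.le)
    (hc.continuousOn (s := Icc x y))
  have hMx : ∀ z ∈ Icc x y, F z ≤ F c := fun z hz => hcM hz
  have hFc : y ≤ F c := by
    by_contra hcon
    push Not at hcon
    have h1 := hMx x ⟨le_rfl, hxy.le⟩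
    refine trap' hF (b := (F c + y)/2) (by linarith) ?_ hx
    intro z hz
    have := hMx z ⟨hz.1, by linarith [hz.2]⟩
    exact ⟨hymin z hz.1 (by linarith [hz.2]), by linarith⟩
  have hcp : c < p := by
    by_contra hcon
    push Not at hcon
    refine noT1 p c y hpy hcon hcm.2 ?_ ?_
    · exact cov hc ⟨le_rfl, hcon⟩ ⟨hcon, le_rfl⟩ hFp.le hFc
    · exact cov hc (right_mem_Icc.2 hcm.2) (left_mem_Icc.2 hcm.2) (by linarith) hFc
  have hpx : p < F x := by
    by_contra hcon
    push Not at hcon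
    have hpyx : Icc x p ⊆ F '' Icc p y :=
      cov hc (right_mem_Icc.2 hpy.le) (left_mem_Icc.2 hpy.le) hymem.2 hFp.ge
    refine noT2 x c p hxp hcm.1 hcp.le ?_ ?_
    · exact cov2 (cov hc (left_mem_Icc.2 hcm.1) (right_mem_Icc.2 hcm.1) hcon hFc) hpyx
    · exact cov2 (cov hc (right_mem_Icc.2 hcp.le) (left_mem_Icc.2 hcp.le) hFp.le hFc) hpyx
  refine ⟨p, hFp, hxp, hpx, ?_, ?_⟩
  swap
  · intro q hq hxq
    by_contra hcon
    push Not at hcon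
    have := hpmin q hxq.le hcon
    linarith
  by_contra hcon
  push Not at hcon
  rcases le_or_gt y (F x) with hyx | hyx
  · have hxpc : Icc p (F x) ⊆ F '' Icc x p :=
      cov hc (right_mem_Icc.2 hxp.le) (left_mem_Icc.2 hxp.le) hFp.le le_rfl
    refine noT2 p y (F x) hpx hpy.le hyx ?_ ?_
    · exact cov2 (cov hc (right_mem_Icc.2 hpy.le) (left_mem_Icc.2 hpy.le) hymem.2 hFp.ge) hxpc
    · exact cov2 (cov hc (left_mem_Icc.2 hyx) (right_mem_Icc.2 hyx) hymem.2 hcon) hxpc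
  · obtain ⟨w, hw, hFw⟩ := cov hc (right_mem_Icc.2 hyx.le) (left_mem_Icc.2 hyx.le)
      (hymem.2.trans hxp.le) hcon (⟨le_rfl, le_rfl⟩ : p ∈ Icc p p)
    have hwy : w < y := by
      rcases hw.2.lt_or_eq with h | h
      · exact h
      · rw [h] at hFw; linarith [hymem.2]
    have hpw : p < w := hpx.trans_le hw.1
    have h1 : ∀ z ∈ Icc p w, F z < w := by
      intro z hz
      by_contra hz'
      push Not at hz'
      refine noT1 p z w hpw hz.1 hz.2 ?_ ?_
      · exact cov hc (left_mem_Icc.2 hz.1) (right_mem_Icc.2 hz.1) hFp.le hz'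
      · exact cov hc (right_mem_Icc.2 hz.2) (left_mem_Icc.2 hz.2) hFw.le hz'
    obtain ⟨δ, hδ, hδm⟩ := isCompact_Icc.exists_isMinOn (nonempty_Icc.2 hpw.le)
      (hc.continuousOn (s := Icc p w))
    have hmin : ∀ z ∈ Icc p w, F δ ≤ F z := fun z hz => hδm hz
    have hdp : F δ ≤ p := by simpa [hFp] using hmin p (left_mem_Icc.2 hpw.le)
    have hxd : x < F δ := hymin δ (hxp.le.trans hδ.1) (hδ.2.trans_lt hwy)
    have h2 : ∀ z ∈ Icc (F δ) p, F z < w := by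
      intro z hz
      by_contra hz'
      push Not at hz'
      have hpw' : Icc p w ⊆ F '' Icc (F δ) p :=
        cov hc (right_mem_Icc.2 hdp) hz hFp.le hz'
      refine noT2 p δ w hpw hδ.1 hδ.2 ?_ ?_
      · exact cov2 (cov hc (right_mem_Icc.2 hδ.1) (left_mem_Icc.2 hδ.1) le_rfl hFp.ge) hpw'
      · exact cov2 (cov hc (left_mem_Icc.2 hδ.2) (right_mem_Icc.2 hδ.2) le_rfl hFw.ge) hpw'
    obtain ⟨d', hd'1, hd'2, hd'3⟩ : ∃ d', x < d' ∧ d' < F δ ∧ ∀ z ∈ Icc d' (F δ), F z < w := by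
      have hop : IsOpen {z | F z < w} := isOpen_lt hc continuous_const
      obtain ⟨η, hη, hball⟩ := Metric.isOpen_iff.1 hop (F δ) (h2 _ (left_mem_Icc.2 hdp))
      refine ⟨max ((x + F δ)/2) (F δ - η/2), lt_max_of_lt_left (by linarith),
        max_lt (by linarith) (by linarith), ?_⟩
      intro z hz
      apply hball
      rw [Metric.mem_ball, Real.dist_eq, abs_lt]
      have := (le_max_right ((x + F δ)/2) (F δ - η/2)).trans hz.1
      constructor <;> linarith [hz.2]
    have h3 : ∀ z ∈ Icc d' w, F z < w := by
      intro z hz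
      rcases le_total z (F δ) with h | h
      · exact hd'3 z ⟨hz.1, h⟩
      rcases le_total z p with h' | h'
      · exact h2 z ⟨h, h'⟩
      · exact h1 z ⟨h', hz.2⟩
    have hd'w : d' ≤ w := by linarith
    obtain ⟨μ, hμ, hμM⟩ := isCompact_Icc.exists_isMaxOn (nonempty_Icc.2 hd'w)
      (hc.continuousOn (s := Icc d' w))
    have hmax : ∀ z ∈ Icc d' w, F z ≤ F μ := fun z hz => hμM hz
    have hμw := h3 μ hμ
    have hx1 : F (F x) ≤ F μ := hmax _ ⟨by linarith, hw.1⟩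
    have := trap hF (a := d') (b := (F μ + w)/2) (x := x) (k := 2) ?_ hx ?_
    · linarith [this.1]
    · intro z hz
      have hzw : z ≤ w := by linarith [hz.2]
      refine ⟨?_, by linarith [hmax z ⟨hz.1, hzw⟩]⟩
      rcases lt_or_ge z p with h | h
      · exact hz.1.trans_lt (hpmin z (by linarith [hz.1]) h)
      · exact hd'2.trans_le (hmin z ⟨h, hzw⟩)
    · show F (F x) ∈ _
      exact ⟨by linarith, by linarith⟩

/-- reflection -/
def refl (F : ℝ → ℝ) : ℝ → ℝ := fun z => -F (-z)

lemma refl_iter (F : ℝ → ℝ) (n : ℕ) (z : ℝ) : (refl F)^[n] z = - F^[n] (-z) := by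
  induction n generalizing z with
  | zero => simp
  | succ n ih => rw [Function.iterate_succ_apply, ih, Function.iterate_succ_apply]; simp [refl]

lemma refl_uc {F : ℝ → ℝ} (hF : UniformContinuous F) : UniformContinuous (refl F) :=
  (hF.comp uniformContinuous_neg).neg

lemma refl_CRp {F : ℝ → ℝ} {x : ℝ} (hx : CRp F x) : CRp (refl F) (-x) := by
  intro ε hε
  refine Relation.TransGen.lift (fun z : ℝ => -z) ?_ _ _ (hx ε hε)
  intro a b h
  show dist (-F (- -a)) (-b) < ε
  simpa using h

lemma refl_HS {F : ℝ → ℝ} (h : HS (refl F)) : HS F := by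
  obtain ⟨n, hn, K0, K1, h1, h2, h3, h4, h5, h6⟩ := h
  have key : ∀ K L : Set ℝ, K ⊆ (refl F)^[n] '' L → (fun z : ℝ => -z) ⁻¹' K ⊆ F^[n] '' ((fun z : ℝ => -z) ⁻¹' L) := by
    intro K L hKL z hz
    obtain ⟨w, hw, hwz⟩ := hKL hz
    rw [refl_iter] at hwz
    exact ⟨-w, by simpa using hw, by simpa using hwz⟩
  refine ⟨n, hn, (fun z : ℝ => -z) ⁻¹' K0, (fun z : ℝ => -z) ⁻¹' K1, h1.preimage continuous_neg,
    h2.preimage continuous_neg, h3.preimage _, ?_, ?_, ?_⟩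
  · obtain ⟨z, hz⟩ := h4
    exact ⟨-z, by simpa using hz⟩
  · rw [← Set.preimage_union]; exact key _ _ h5
  · rw [← Set.preimage_union]; exact key _ _ h6

lemma left_mover {F : ℝ → ℝ} (hF : UniformContinuous F) {lo : ℝ} (hb : ∀ z, lo ≤ F z)
    (hS : ¬ HS F) {x : ℝ} (hx : CRp F x) (hmv : F x < x) :
    ∃ p, F p = p ∧ p < x ∧ F x < p ∧ p < F (F x) ∧ ∀ q, F q = q → q < x → q ≤ p := by
  obtain ⟨p, h1, h2, h3, h4, h5⟩ := right_mover (refl_uc hF) (hi := -lo)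
    (fun z => by simpa [refl] using hb (-z)) (fun h => hS (refl_HS h)) (refl_CRp hx)
    (by simpa [refl] using hmv)
  refine ⟨-p, ?_, by linarith, ?_, ?_, ?_⟩
  · simp only [refl] at h1; linarith
  · simp only [refl, neg_neg] at h3; linarith
  · simp only [refl, neg_neg] at h4; linarith
  · intro q hq hqx
    have := h5 (-q) (by simp [refl, hq]) (by linarith)
    linarith

lemma alt {F : ℝ → ℝ} (hF : UniformContinuous F) {lo hi : ℝ} (hb : ∀ z, F z ∈ Icc lo hi)
    (hS : ¬ HS F) {x : ℝ} (hx : CRp F x) (hmv : F x ≠ x) :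
    ∃ q, F q = q ∧ ∀ k, (F^[k] x < q ∧ q < F^[k+1] x) ∨ (q < F^[k] x ∧ F^[k+1] x < q) := by
  have step : ∀ q z, F q = q → CRp F z → ((z < q ∧ q < F z) ∨ (q < z ∧ F z < q)) →
      ((F z < q ∧ q < F (F z)) ∨ (q < F z ∧ F (F z) < q)) := by
    rintro q z hq hz (⟨h1, h2⟩ | ⟨h1, h2⟩)
    · obtain ⟨p, _, _, _, h, h'⟩ := right_mover hF (fun z => (hb z).2) hS hz (h1.trans h2)
      exact Or.inr ⟨h2, h.trans_le (h' q hq h1)⟩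
    · obtain ⟨p, _, _, _, h, h'⟩ := left_mover hF (fun z => (hb z).1) hS hz (h2.trans h1)
      exact Or.inl ⟨h2, (h' q hq h1).trans_lt h⟩
  have base : ∃ q, F q = q ∧ ((x < q ∧ q < F x) ∨ (q < x ∧ F x < q)) := by
    rcases lt_or_gt_of_ne hmv with h | h
    · obtain ⟨p, h1, h2, h3, _, _⟩ := left_mover hF (fun z => (hb z).1) hS hx h
      exact ⟨p, h1, Or.inr ⟨h2, h3⟩⟩
    · obtain ⟨p, h1, h2, h3, _, _⟩ := right_mover hF (fun z => (hb z).2) hS hx h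
      exact ⟨p, h1, Or.inl ⟨h2, h3⟩⟩
  obtain ⟨q, hq, hbase⟩ := base
  refine ⟨q, hq, fun k => ?_⟩
  induction k with
  | zero => simpa using hbase
  | succ k ih =>
    rw [Function.iterate_succ_apply'] at ih
    have := step q _ hq (CRp_iter hF hx k) ih
    rw [Function.iterate_succ_apply', Function.iterate_succ_apply', Function.iterate_succ_apply']
    exact this

lemma alt_par {F : ℝ → ℝ} {q x : ℝ}
    (h : ∀ k, (F^[k] x < q ∧ q < F^[k+1] x) ∨ (q < F^[k] x ∧ F^[k+1] x < q)) (k : ℕ) :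
    (x < q → ∀ j, (k = 2*j → F^[k] x < q) ∧ (k = 2*j+1 → q < F^[k] x)) ∧
    (q < x → ∀ j, (k = 2*j → q < F^[k] x) ∧ (k = 2*j+1 → F^[k] x < q)) := by
  induction k with
  | zero =>
    refine ⟨fun hx j => ⟨fun _ => hx, fun h => by omega⟩, fun hx j => ⟨fun _ => hx, fun h => by omega⟩⟩
  | succ k ih =>
    refine ⟨fun hx j => ⟨fun hk => ?_, fun hk => ?_⟩, fun hx j => ⟨fun hk => ?_, fun hk => ?_⟩⟩
    · have := (ih.1 hx (j-1)).2 (by omega)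
      rcases h k with h' | h'
      · linarith [h'.1]
      · exact h'.2
    · have := (ih.1 hx j).1 (by omega)
      rcases h k with h' | h'
      · exact h'.2
      · linarith [h'.1]
    · have := (ih.2 hx (j-1)).2 (by omega)
      rcases h k with h' | h'
      · exact h'.2
      · linarith [h'.1]
    · have := (ih.2 hx j).1 (by omega)
      rcases h k with h' | h'
      · linarith [h'.1]
      · exact h'.2

end SeqEnt

namespace SeqEnt

lemma sides {h : ℝ → ℝ} (hF : UniformContinuous h) {lo hi : ℝ} (hb : ∀ z, h z ∈ Icc lo hi)
    (hS : ¬ HS h) {x : ℝ} (hx : CRp h x) {e1 e2 e3 : ℕ} (h12 : (e1 + e2) % 2 = 1)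
    (h23 : (e2 + e3) % 2 = 0) (hne : h^[e2] x ≠ h^[e3] x) :
    ∃ q, h q = q ∧
      ((h^[e2] x < q ∧ h^[e3] x < q ∧ q < h^[e1] x ∧ q < h^[e2+1] x ∧ q < h^[e3+1] x) ∨
       (q < h^[e2] x ∧ q < h^[e3] x ∧ h^[e1] x < q ∧ h^[e2+1] x < q ∧ h^[e3+1] x < q)) := by
  have hmv : h x ≠ x := by
    intro hx'
    exact hne (by rw [Function.iterate_fixed hx', Function.iterate_fixed hx'])
  obtain ⟨q, hq, hk⟩ := alt hF hb hS hx hmv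
  refine ⟨q, hq, ?_⟩
  have A := fun k => (alt_par hk k).1
  have B := fun k => (alt_par hk k).2
  have hxq : x < q ∨ q < x := by
    rcases hk 0 with h | h
    · exact Or.inl h.1
    · exact Or.inr h.1
  rcases Nat.even_or_odd' e2 with ⟨j, hj | hj⟩ <;> rcases hxq with hxq | hxq
  · left
    exact ⟨(A e2 hxq j).1 hj, (A e3 hxq (e3/2)).1 (by omega), (A e1 hxq (e1/2)).2 (by omega),
      (A _ hxq j).2 (by omega), (A _ hxq (e3/2)).2 (by omega)⟩
  · right
    exact ⟨(B e2 hxq j).1 hj, (B e3 hxq (e3/2)).1 (by omega), (B e1 hxq (e1/2)).2 (by omega),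
      (B _ hxq j).2 (by omega), (B _ hxq (e3/2)).2 (by omega)⟩
  · right
    exact ⟨(A e2 hxq j).2 hj, (A e3 hxq (e3/2)).2 (by omega), (A e1 hxq (e1/2)).1 (by omega),
      (A _ hxq (j+1)).1 (by omega), (A _ hxq ((e3+1)/2)).1 (by omega)⟩
  · left
    exact ⟨(B e2 hxq j).2 hj, (B e3 hxq (e3/2)).2 (by omega), (B e1 hxq (e1/2)).1 (by omega),
      (B _ hxq (j+1)).1 (by omega), (B _ hxq ((e3+1)/2)).1 (by omega)⟩

lemma core {h : ℝ → ℝ} (hc : Continuous h) (hS : ¬ HS h) {p q c U U' V V' : ℝ} {m : ℕ}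
    (hp : h p = p) (hq : h q = q) (x2 : c ≤ U) (x3 : U' < c) (y2 : V < c) (y3 : c ≤ V')
    (P1 : U < p) (P2 : U' < p) (P3 : p < h U) (P4 : p < h U')
    (Q1 : q < V) (Q2 : q < V') (Q3 : h V < q) (Q4 : h V' < q)
    (hU' : h^[m] (h U) = U') (hV' : h^[m] (h V) = V') : False := by
  have hcm : Continuous (h^[m]) := hc.iterate m
  have hpm : h^[m] p = p := Function.iterate_fixed hp m
  have hqm : h^[m] q = q := Function.iterate_fixed hq m
  have hVU : V ≤ U := by linarith
  have hmV : V ∈ Icc V U := ⟨le_rfl, hVU⟩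
  have hmU : U ∈ Icc V U := ⟨hVU, le_rfl⟩
  rcases le_or_gt U' V with h1 | h1
  · refine hS (HS_of_loop hc (K := Icc V U) (L := Icc p (h U)) isClosed_Icc isClosed_Icc
      ⟨_, hmV⟩ ?_ (cov hc hmV hmU (by linarith) (by linarith))
      (cov hc hmV hmU (by linarith) (by linarith)) (m := m)
      (cov hcm (right_mem_Icc.2 P3.le) (left_mem_Icc.2 P3.le) (by linarith) (by linarith)))
    rw [Set.disjoint_left]
    intro z hz hz'
    linarith [hz.2, hz'.1]
  rcases le_or_gt U V' with h2 | h2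
  · refine hS (HS_of_loop hc (K := Icc V U) (L := Icc (h V) q) isClosed_Icc isClosed_Icc
      ⟨_, hmV⟩ ?_ (cov hc hmV hmU (by linarith) (by linarith))
      (cov hc hmV hmU (by linarith) (by linarith)) (m := m)
      (cov hcm (right_mem_Icc.2 Q3.le) (left_mem_Icc.2 Q3.le) (by linarith) (by linarith)))
    rw [Set.disjoint_left]
    intro z hz hz'
    linarith [hz.1, hz'.2]
  · have hsub : Icc V U' ∪ Icc V' U ⊆ Icc V U := by
      rintro z (hz | hz)
      · exact ⟨hz.1, by linarith [hz.2]⟩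
      · exact ⟨by linarith [hz.1], hz.2⟩
    refine hS ⟨1, le_rfl, Icc V U', Icc V' U, isClosed_Icc, isClosed_Icc, ?_, ⟨V, le_rfl, h1.le⟩,
      hsub.trans ?_, hsub.trans ?_⟩
    · rw [Set.disjoint_left]
      intro z hz hz'
      linarith [hz.2, hz'.1]
    · exact cov hc (left_mem_Icc.2 h1.le) (right_mem_Icc.2 h1.le) (by linarith) (by linarith)
    · exact cov hc (left_mem_Icc.2 h2.le) (right_mem_Icc.2 h2.le) (by linarith) (by linarith)

lemma two_point_h {h : ℝ → ℝ} (hF : UniformContinuous h) {lo hi : ℝ} (hb : ∀ z, h z ∈ Icc lo hi)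
    (hS : ¬ HS h) {x y c : ℝ} (hx : CRp h x) (hy : CRp h y) {e1 e2 e3 : ℕ}
    (h12 : (e1 + e2) % 2 = 1) (h23 : (e2 + e3) % 2 = 0) (hlt : e2 < e3)
    (x1 : c ≤ h^[e1] x) (x2 : c ≤ h^[e2] x) (x3 : h^[e3] x < c)
    (y1 : h^[e1] y < c) (y2 : h^[e2] y < c) (y3 : c ≤ h^[e3] y) : False := by
  have hc := hF.continuous
  obtain ⟨p, hp, hpp⟩ := sides hF hb hS hx h12 h23 (by intro h'; linarith)
  obtain ⟨q, hq, hqq⟩ := sides hF hb hS hy h12 h23 (by intro h'; linarith)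
  have P : h^[e2] x < p ∧ h^[e3] x < p ∧ p < h^[e2+1] x ∧ p < h^[e3+1] x := by
    rcases hpp with ⟨a1, a2, a3, a4, a5⟩ | ⟨a1, a2, a3, a4, a5⟩
    · exact ⟨a1, a2, a4, a5⟩
    · linarith
  have Q : q < h^[e2] y ∧ q < h^[e3] y ∧ h^[e2+1] y < q ∧ h^[e3+1] y < q := by
    rcases hqq with ⟨a1, a2, a3, a4, a5⟩ | ⟨a1, a2, a3, a4, a5⟩
    · linarith
    · exact ⟨a1, a2, a4, a5⟩
  obtain ⟨m, hm⟩ : ∃ m, e3 = m + (e2 + 1) := ⟨e3 - (e2+1), by omega⟩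
  have hU3 : h^[e3] x = h^[m] (h^[e2+1] x) := by rw [hm, Function.iterate_add_apply]
  have hV3 : h^[e3] y = h^[m] (h^[e2+1] y) := by rw [hm, Function.iterate_add_apply]
  obtain ⟨P1, P2, P3, P4⟩ := P
  obtain ⟨Q1, Q2, Q3, Q4⟩ := Q
  rw [Function.iterate_succ_apply'] at P3 Q3 P4 Q4
  rw [Function.iterate_succ_apply'] at hU3 hV3
  exact core hc hS hp hq x2 x3 y2 y3 P1 P2 P3 P4 Q1 Q2 Q3 Q4 hU3.symm hV3.symm

lemma two_point {F : ℝ → ℝ} (hF : UniformContinuous F) {lo hi : ℝ} (hb : ∀ z, F z ∈ Icc lo hi)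
    (hS : ¬ HS F) {x y c : ℝ} (hx : CRp F x) (hy : CRp F y) {v m e1 e2 e3 : ℕ}
    (h12 : (e1 + e2) % 2 = 1) (h23 : (e2 + e3) % 2 = 0) (hlt : e2 < e3)
    (x1 : c ≤ F^[m + 2^v * e1] x) (x2 : c ≤ F^[m + 2^v * e2] x) (x3 : F^[m + 2^v * e3] x < c)
    (y1 : F^[m + 2^v * e1] y < c) (y2 : F^[m + 2^v * e2] y < c)
    (y3 : c ≤ F^[m + 2^v * e3] y) : False := by
  have key : ∀ e z, F^[m + 2^v * e] z = (F^[2^v])^[e] (F^[m] z) := by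
    intro e z
    rw [add_comm, Function.iterate_add_apply, Function.iterate_mul]
  rw [key] at x1 x2 x3 y1 y2 y3
  have h1 : 1 ≤ 2^v := Nat.one_le_two_pow
  refine two_point_h (uc_iter hF _) (lo := lo) (hi := hi) ?_ (fun h => hS (HS_of_iterate h1 h))
    (CRp_pow hF (CRp_iter hF hx m) v) (CRp_pow hF (CRp_iter hF hy m) v) h12 h23 hlt x1 x2 x3 y1 y2 y3
  intro z
  obtain ⟨k, hk⟩ : ∃ k, 2^v = k+1 := ⟨2^v-1, by omega⟩
  rw [hk, Function.iterate_succ_apply']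
  exact hb _

/-- good triple of times -/
def GT (t1 t2 t3 : ℕ) : Prop := ∃ v m e1 e2 e3 : ℕ, t1 = m + 2^v * e1 ∧ t2 = m + 2^v * e2 ∧
  t3 = m + 2^v*e3 ∧ (e1 + e2) % 2 = 1 ∧ (e2 + e3) % 2 = 0 ∧ e2 < e3

lemma GT_double {a b c r : ℕ} (h : GT a b c) : GT (2*a+r) (2*b+r) (2*c+r) := by
  obtain ⟨v, m, e1, e2, e3, rfl, rfl, rfl, h⟩ := h
  exact ⟨v+1, 2*m+r, e1, e2, e3, by ring, by ring, by ring, h⟩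

lemma GT_exists (N : ℕ) : ∀ a b c : ℕ, a + b + c ≤ N → a < b → b < c →
    GT a b c ∨ GT b a c ∨ GT c a b := by
  induction N using Nat.strong_induction_on with
  | _ N ih =>
    intro a b c hN hab hbc
    by_cases h1 : (a + b) % 2 = 0
    · by_cases h2 : (b + c) % 2 = 0
      · have ha : a = 2 * (a/2) + a % 2 := by omega
        have hb : b = 2 * (b/2) + a % 2 := by omega
        have hc : c = 2 * (c/2) + a % 2 := by omega
        have := ih (a/2+b/2+c/2) (by omega) (a/2) (b/2) (c/2) le_rfl (by omega) (by omega)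
        generalize a % 2 = r at *
        rcases this with h | h | h
        · left; have := GT_double (r := r) h; rwa [← ha, ← hb, ← hc] at this
        · right; left; have := GT_double (r := r) h; rwa [← ha, ← hb, ← hc] at this
        · right; right; have := GT_double (r := r) h; rwa [← ha, ← hb, ← hc] at this
      · right; right
        exact ⟨0, 0, c, a, b, by simp, by simp, by simp, by omega, by omega, hab⟩
    · by_cases h2 : (b + c) % 2 = 0
      · left
        exact ⟨0, 0, a, b, c, by simp, by simp, by simp, by omega, by omega, hbc⟩
      · right; left
        exact ⟨0, 0, b, a, c, by simp, by simp, by simp, by omega, by omega, by omega⟩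

end SeqEnt

namespace SeqEnt

open Classical in
/-- code of an orbit -/
noncomputable def code (F : ℝ → ℝ) (t : ℕ → ℕ) (n : ℕ) (c x : ℝ) : Finset (Fin n) :=
  Finset.univ.filter fun i => c ≤ F^[t i.1] x

open Classical in
/-- family of codes -/
noncomputable def fam (F : ℝ → ℝ) (t : ℕ → ℕ) (n : ℕ) (c : ℝ) : Finset (Finset (Fin n)) :=
  Finset.univ.filter fun S => ∃ x, CRp F x ∧ code F t n c x = S

lemma mem_code {F : ℝ → ℝ} {t : ℕ → ℕ} {n : ℕ} {c x : ℝ} {i : Fin n} :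
    i ∈ code F t n c x ↔ c ≤ F^[t i.1] x := by
  simp [code]

lemma mem_fam {F : ℝ → ℝ} {t : ℕ → ℕ} {n : ℕ} {c : ℝ} {S : Finset (Fin n)} :
    S ∈ fam F t n c ↔ ∃ x, CRp F x ∧ code F t n c x = S := by
  simp [fam]

lemma no_triple {F : ℝ → ℝ} (hF : UniformContinuous F) {lo hi : ℝ} (hb : ∀ z, F z ∈ Icc lo hi)
    (hS : ¬ HS F) {t : ℕ → ℕ} {n : ℕ} {c : ℝ} {s : Finset (Fin n)}
    (hs : (fam F t n c).Shatters s) {i j k : Fin n} (hi' : i ∈ s) (hj : j ∈ s) (hk : k ∈ s)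
    (hik : i ≠ k) (hjk : j ≠ k) (h : GT (t i) (t j) (t k)) : False := by
  obtain ⟨u, hu, hu'⟩ := hs (t := {i, j}) (by
    intro z hz
    simp only [Finset.mem_insert, Finset.mem_singleton] at hz
    rcases hz with rfl | rfl <;> assumption)
  obtain ⟨w, hw, hw'⟩ := hs (t := {k}) (by
    intro z hz
    simp only [Finset.mem_singleton] at hz
    rcases hz with rfl; assumption)
  obtain ⟨x, hx, rfl⟩ := mem_fam.1 hu
  obtain ⟨y, hy, rfl⟩ := mem_fam.1 hw
  have U : ∀ z ∈ s, (c ≤ F^[t z.1] x ↔ z = i ∨ z = j) := by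
    intro z hz
    have := Finset.ext_iff.1 hu' z
    simpa [hz, mem_code] using this
  have V : ∀ z ∈ s, (c ≤ F^[t z.1] y ↔ z = k) := by
    intro z hz
    have := Finset.ext_iff.1 hw' z
    simpa [hz, mem_code] using this
  obtain ⟨v, m, e1, e2, e3, h1, h2, h3, h4, h5, h6⟩ := h
  have x1 := (U i hi').2 (Or.inl rfl)
  have x2 := (U j hj).2 (Or.inr rfl)
  have x3 : ¬ (c ≤ F^[t k.1] x) := fun h' => by
    rcases (U k hk).1 h' with h | h
    · exact hik h.symm
    · exact hjk h.symm
  have y1 : ¬ (c ≤ F^[t i.1] y) := fun h' => hik ((V i hi').1 h')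
  have y2 : ¬ (c ≤ F^[t j.1] y) := fun h' => hjk ((V j hj).1 h')
  have y3 := (V k hk).2 rfl
  rw [h1] at x1 y1
  rw [h2] at x2 y2
  rw [h3] at x3 y3
  exact two_point hF hb hS hx hy h4 h5 h6 x1 x2 (not_le.1 x3) (not_le.1 y1) (not_le.1 y2) y3

lemma fam_card {F : ℝ → ℝ} (hF : UniformContinuous F) {lo hi : ℝ} (hb : ∀ z, F z ∈ Icc lo hi)
    (hS : ¬ HS F) {t : ℕ → ℕ} (ht : StrictMono t) (n : ℕ) (c : ℝ) :
    (fam F t n c).card ≤ (n+1)^2 := by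
  have hvc : (fam F t n c).vcDim ≤ 2 := by
    unfold Finset.vcDim
    refine Finset.sup_le ?_
    intro s hs
    rw [Finset.mem_shatterer] at hs
    by_contra hcon
    push Not at hcon
    have key : ∀ i ∈ s, ∀ j ∈ s, ∀ k ∈ s, i < j → j < k → False := by
      intro i hi j hj k hk hij hjk
      rcases GT_exists _ (t i) (t j) (t k) le_rfl (ht hij) (ht hjk) with h | h | h
      · exact no_triple hF hb hS hs hi hj hk (hij.trans hjk).ne hjk.ne h
      · exact no_triple hF hb hS hs hj hi hk hjk.ne (hij.trans hjk).ne h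
      · exact no_triple hF hb hS hs hk hi hj hjk.ne' hij.ne h
    obtain ⟨s', hs', hc'⟩ := Finset.exists_subset_card_eq (n := 3) (s := s) (by omega)
    have o := s'.orderEmbOfFin hc'
    have om := fun a => hs' (Finset.orderEmbOfFin_mem s' hc' a)
    exact key _ (om 0) _ (om 1) _ (om 2) ((s'.orderEmbOfFin hc').strictMono (by decide))
      ((s'.orderEmbOfFin hc').strictMono (by decide))
  calc (fam F t n c).card ≤ (fam F t n c).shatterer.card := Finset.card_le_card_shatterer _
    _ ≤ ∑ k ∈ Finset.Iic (fam F t n c).vcDim, (Fintype.card (Fin n)).choose k :=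
        Finset.card_shatterer_le_sum_vcDim
    _ ≤ ∑ k ∈ Finset.Iic 2, (Fintype.card (Fin n)).choose k :=
        Finset.sum_le_sum_of_subset (Finset.Iic_subset_Iic.2 hvc)
    _ ≤ (n+1)^2 := by
        have : Finset.Iic 2 = ({0,1,2} : Finset ℕ) := by decide
        rw [this]
        have h2 := Nat.choose_le_pow n 2
        simp
        have := Nat.choose_two_right n
        nlinarith

lemma cuts {r : ℕ} (hr : 0 < r) {u v η : ℝ} (hη : 1 / (r:ℝ) < η) (hu : u ∈ Icc (0:ℝ) 1)
    (hv : v ∈ Icc (0:ℝ) 1) (h : ∀ j : Fin (r+1), ((j.1 : ℝ)/r ≤ u ↔ (j.1:ℝ)/r ≤ v)) :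
    v - u < η := by
  by_contra hcon
  push Not at hcon
  have hr' : (0:ℝ) < r := by exact_mod_cast hr
  have h1 : 1 / (r:ℝ) * r = 1 := by field_simp
  have h2 : u * r + 1 ≤ v * r := by nlinarith
  have h0 : 0 ≤ u * r := mul_nonneg hu.1 hr'.le
  have h3 := Nat.lt_floor_add_one (u * r)
  have h4 := Nat.floor_le h0
  have h5 : v * r ≤ r := by nlinarith [hv.2]
  have h6 : ⌊u * r⌋₊ + 1 ≤ r := by
    have : ((⌊u * r⌋₊ + 1 : ℕ) : ℝ) ≤ r := by push_cast; linarith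
    exact_mod_cast this
  have := (h ⟨⌊u * r⌋₊ + 1, by omega⟩).2 (by
    rw [div_le_iff₀ hr']; push_cast; linarith)
  rw [div_le_iff₀ hr'] at this
  push_cast at this
  linarith

lemma count_le {X : Type*} [MetricSpace X] {f : X → X} {e : X → ℝ} {F : ℝ → ℝ}
    (hF : UniformContinuous F) {lo hi : ℝ} (hb : ∀ z, F z ∈ Icc lo hi)
    (hS : ¬ HS F) (hconj : ∀ n x, e (f^[n] x) = F^[n] (e x)) (he : ∀ x, e x ∈ Icc (0:ℝ) 1)
    (hinv : ∀ δ > 0, ∃ η > 0, ∀ x y, |e x - e y| < η → dist x y < δ)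
    {Y : Set X} (hY : IsCompact Y) (hYf : MapsTo f Y Y) (hCR : ∀ x ∈ Y, CRp F (e x))
    {t : ℕ → ℕ} (ht : StrictMono t) {𝒰 : Finset (Set X)} (hU : IsOpenCoverOn Y 𝒰) :
    ∃ r : ℕ, ∀ n, seqCoverCountOn f Y t 𝒰 n ≤ (n+1)^(2*r) := by
  classical
  obtain ⟨δ, hδ, hleb⟩ := lebesgue_number_lemma_of_metric_sUnion hY hU.1 hU.2
  obtain ⟨η, hη, hη'⟩ := hinv δ hδ
  obtain ⟨r, hr⟩ := exists_nat_gt (1/η)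
  have hr0 : 0 < r := by
    have : (0:ℝ) < r := lt_trans (by positivity) hr
    exact_mod_cast this
  have hr1 : 1 / (r:ℝ) < η := by
    have : (0:ℝ) < r := by exact_mod_cast hr0
    rw [div_lt_iff₀ hη] at hr
    rw [div_lt_iff₀ this]; linarith
  refine ⟨r+1, fun n => ?_⟩
  let Φ : ℝ → (Fin (r+1) → Finset (Fin n)) := fun x j => code F t n ((j.1:ℝ)/r) x
  let T : Finset (Fin (r+1) → Finset (Fin n)) := Fintype.piFinset fun j => fam F t n ((j.1:ℝ)/r)
  let T' := T.filter fun τ => ∃ x ∈ Y, Φ (e x) = τ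
  have hT : T.card ≤ (n+1)^(2*(r+1)) := by
    rw [Fintype.card_piFinset, pow_mul]
    calc _ ≤ ∏ j : Fin (r+1), (n+1)^2 := Finset.prod_le_prod' (fun j _ => fam_card hF hb hS ht n _)
      _ = _ := by simp
  have hT' : T'.card ≤ T.card := Finset.card_filter_le _ _
  refine le_trans (Nat.sInf_le ?_) (hT'.trans hT)
  have rep : ∀ τ : T', ∃ x ∈ Y, Φ (e x) = τ.1 := fun τ => (Finset.mem_filter.1 τ.2).2
  choose g hgY hgΦ using rep
  have hYn : ∀ k x, x ∈ Y → f^[k] x ∈ Y := fun k x hx => hYf.iterate k hx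
  choose! W hW hW' using hleb
  refine ⟨fun j i => W (f^[t i.1] (g (T'.equivFin.symm j))), fun j i => hW _ (hYn _ _ (hgY _)), ?_⟩
  intro x hx
  have hxT : Φ (e x) ∈ T' := by
    refine Finset.mem_filter.2 ⟨?_, x, hx, rfl⟩
    rw [Fintype.mem_piFinset]
    exact fun j => mem_fam.2 ⟨e x, hCR x hx, rfl⟩
  refine Set.mem_iUnion.2 ⟨T'.equivFin ⟨_, hxT⟩, Set.mem_iInter.2 fun i => ?_⟩
  show x ∈ f^[t i.1] ⁻¹' (W (f^[t i.1] (g (T'.equivFin.symm (T'.equivFin ⟨Φ (e x), hxT⟩)))))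
  rw [Equiv.symm_apply_apply]
  have hΦ := hgΦ ⟨_, hxT⟩
  set y := g ⟨_, hxT⟩ with hy
  have hyY : y ∈ Y := hgY _
  apply hW' _ (hYn _ _ hyY)
  rw [Metric.mem_ball]
  apply hη'
  have hcode : ∀ j : Fin (r+1), ((j.1 : ℝ)/r ≤ e (f^[t i.1] y) ↔ (j.1:ℝ)/r ≤ e (f^[t i.1] x)) := by
    intro j
    have := Finset.ext_iff.1 (congrFun hΦ j) i
    rw [hconj, hconj]
    simpa only [Φ, mem_code] using this
  rw [abs_lt]
  constructor
  · have := cuts hr0 hr1 (he _) (he _) (fun j => (hcode j).symm)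
    linarith
  · have := cuts hr0 hr1 (he _) (he _) hcode
    linarith

lemma entropy_zero_of_count {X : Type*} [TopologicalSpace X] {f : X → X} {Y : Set X} {t : ℕ → ℕ}
    (h : ∀ 𝒰 : Finset (Set X), IsOpenCoverOn Y 𝒰 →
      ∃ r : ℕ, ∀ n, seqCoverCountOn f Y t 𝒰 n ≤ (n+1)^(2*r)) : seqEntropyOn f Y t = 0 := by
  unfold seqEntropyOn
  simp only [ENNReal.iSup_eq_zero]
  intro 𝒰 hU
  obtain ⟨r, hr⟩ := h 𝒰 hU
  have h1 : Tendsto (fun n : ℕ => ((2*r : ℕ):ℝ) * (Real.log ((n:ℝ)+1) / n)) atTop (𝓝 0) := by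
    have := (Real.tendsto_pow_log_div_mul_add_atTop 1 (-1) 1 one_ne_zero).comp
      (tendsto_atTop_add_const_right atTop (1:ℝ) (tendsto_natCast_atTop_atTop (R := ℝ)))
    have h2 := this.const_mul ((2*r : ℕ):ℝ)
    rw [mul_zero] at h2
    refine h2.congr ?_
    intro n
    simp
  have h2 := ENNReal.tendsto_ofReal h1
  rw [ENNReal.ofReal_zero] at h2
  have h3 := tendsto_of_tendsto_of_tendsto_of_le_of_le (tendsto_const_nhds (x := (0:ℝ≥0∞))) h2
    (g := fun _ => 0) (f := fun n : ℕ => ENNReal.ofReal (Real.log (seqCoverCountOn f Y t 𝒰 n) / n))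
    (fun _ => zero_le) (fun n => by
      apply ENNReal.ofReal_le_ofReal
      rw [← mul_div_assoc]
      apply div_le_div_of_nonneg_right _ (Nat.cast_nonneg n)
      rw [← Real.log_pow]
      rcases Nat.eq_zero_or_pos (seqCoverCountOn f Y t 𝒰 n) with h0 | h0
      · rw [h0]
        simp only [Nat.cast_zero, Real.log_zero]
        exact Real.log_nonneg (one_le_pow₀ (by linarith [Nat.cast_nonneg (α := ℝ) n]))
      · apply Real.log_le_log (by exact_mod_cast h0)
        exact_mod_cast hr n)
  exact h3.limsup_eq

end SeqEnt

namespace SeqEnt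

lemma realize {X : Type*} {g : X → X} {K : Bool → Set X} (hne : ∀ b, (K b).Nonempty)
    (hK : ∀ b b', K b ⊆ g '' K b') (m : ℕ) : ∀ s : ℕ → Bool, ∃ x, ∀ i ≤ m, g^[i] x ∈ K (s i) := by
  induction m with
  | zero =>
    intro s
    obtain ⟨x, hx⟩ := hne (s 0)
    exact ⟨x, fun i hi => by obtain rfl : i = 0 := by omega
                             simpa using hx⟩
  | succ m ih =>
    intro s
    obtain ⟨y, hy⟩ := ih (fun i => s (i+1))
    obtain ⟨x, hx, rfl⟩ := hK _ (s 0) (hy 0 (by omega))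
    refine ⟨x, fun i hi => ?_⟩
    cases i with
    | zero => simpa using hx
    | succ i => rw [Function.iterate_succ_apply]; exact hy i (by omega)

lemma cover_nonempty {X : Type*} [TopologicalSpace X] (f : X → X) (Y : Set X) (hYf : MapsTo f Y Y)
    (a : ℕ → ℕ) {𝒰 : Finset (Set X)} (hU : IsOpenCoverOn Y 𝒰) (n : ℕ) :
    { m | ∃ c : Fin m → Fin n → Set X, (∀ j i, c j i ∈ 𝒰) ∧
    Y ⊆ ⋃ j, ⋂ i, f^[a i.1] ⁻¹' c j i }.Nonempty := by
  classical
  refine ⟨Fintype.card (Fin n → 𝒰), fun j i => ((Fintype.equivFin (Fin n → 𝒰)).symm j i).1,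
    fun j i => ((Fintype.equivFin (Fin n → 𝒰)).symm j i).2, ?_⟩
  intro x hx
  have : ∀ i : Fin n, ∃ U : 𝒰, f^[a i.1] x ∈ U.1 := by
    intro i
    obtain ⟨U, hU1, hU2⟩ := hU.2 (hYf.iterate (a i.1) hx)
    exact ⟨⟨U, hU1⟩, hU2⟩
  choose W hW using this
  refine Set.mem_iUnion.2 ⟨Fintype.equivFin (Fin n → 𝒰) W, Set.mem_iInter.2 fun i => ?_⟩
  simpa using hW i

lemma entropy_pos {X : Type*} [TopologicalSpace X] {f : X → X} {K : Bool → Set X} {n : ℕ}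
    (hn : 1 ≤ n) (hne : ∀ b, (K b).Nonempty) (hcl : ∀ b, IsClosed (K b))
    (hd : Disjoint (K false) (K true)) (hK : ∀ b b', K b ⊆ f^[n] '' K b') : topEntropy f ≠ 0 := by
  classical
  intro h0
  let 𝒰 : Finset (Set X) := {(K false)ᶜ, (K true)ᶜ}
  have hU : IsOpenCoverOn (Set.univ : Set X) 𝒰 := by
    constructor
    · intro U hU
      simp only [𝒰, Finset.mem_insert, Finset.mem_singleton] at hU
      rcases hU with rfl | rfl
      · exact (hcl _).isOpen_compl
      · exact (hcl _).isOpen_compl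
    · intro x _
      by_cases hx : x ∈ K false
      · exact ⟨(K true)ᶜ, by simp [𝒰], Set.disjoint_left.1 hd hx⟩
      · exact ⟨(K false)ᶜ, by simp [𝒰], hx⟩
  have hlow : ∀ m, 2^m ≤ seqCoverCountOn f Set.univ id 𝒰 (n*m) := by
    intro m
    obtain ⟨c, hc, hcov⟩ := Nat.sInf_mem
      (cover_nonempty f Set.univ (Set.mapsTo_univ _ _) id hU (n*m))
    have R : ∀ s : Fin m → Bool, ∃ x, ∀ i : Fin m, f^[n*i.1] x ∈ K (s i) := by
      intro s
      obtain ⟨x, hx⟩ := realize hne hK m (fun i => if h : i < m then s ⟨i, h⟩ else true)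
      refine ⟨x, fun i => ?_⟩
      have := hx i.1 i.2.le
      rw [Function.iterate_mul]
      simpa using this
    choose x hx using R
    have J : ∀ s, ∃ j, ∀ i, f^[id i.1] (x s) ∈ c j i := by
      intro s
      obtain ⟨j, hj⟩ := Set.mem_iUnion.1 (hcov (Set.mem_univ (x s)))
      exact ⟨j, fun i => Set.mem_iInter.1 hj i⟩
    choose j hj using J
    have inj : Function.Injective j := by
      intro s s' hss
      funext i
      by_contra hi
      have hlt : n * i.1 < n * m := Nat.mul_lt_mul_of_pos_left i.2 hn
      have h1 := hj s ⟨n*i.1, hlt⟩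
      have h2 := hj s' ⟨n*i.1, hlt⟩
      rw [← hss] at h2
      have hm := hc (j s) ⟨n*i.1, hlt⟩
      have k1 := hx s i
      have k2 := hx s' i
      simp only [id] at h1 h2
      have both : ∀ b, ∃ z, z ∈ K b ∧ z ∈ c (j s) ⟨n*i.1, hlt⟩ := by
        intro b
        by_cases hb : s i = b
        · exact ⟨_, hb ▸ k1, h1⟩
        · have : s' i = b := by
            revert hb hi
            generalize s i = p
            generalize s' i = q
            revert p q b
            decide
          exact ⟨_, this ▸ k2, h2⟩
      simp only [𝒰, Finset.mem_insert, Finset.mem_singleton] at hm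
      rcases hm with hm | hm
      · obtain ⟨z, hz, hz'⟩ := both false
        rw [hm] at hz'; exact hz' hz
      · obtain ⟨z, hz, hz'⟩ := both true
        rw [hm] at hz'; exact hz' hz
    have := Fintype.card_le_of_injective j inj
    simpa [seqCoverCountOn] using this
  have hpos : 0 < Real.log 2 / n := div_pos (Real.log_pos (by norm_num)) (by exact_mod_cast hn)
  have h1 : ENNReal.ofReal (Real.log 2 / n) ≤ Filter.limsup
      (fun k : ℕ => ENNReal.ofReal (Real.log (seqCoverCountOn f Set.univ id 𝒰 k) / k)) atTop := by
    refine Filter.le_limsup_of_frequently_le ?_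
    · rw [Filter.frequently_atTop]
      intro a
      refine ⟨n*(a+1), by nlinarith, ?_⟩
      apply ENNReal.ofReal_le_ofReal
      have hn' : (0:ℝ) < n := by exact_mod_cast hn
      have h2 : ((a+1 : ℕ):ℝ) * Real.log 2 ≤ Real.log (seqCoverCountOn f Set.univ id 𝒰 (n*(a+1))) := by
        rw [← Real.log_pow]
        apply Real.log_le_log (by positivity)
        exact_mod_cast hlow (a+1)
      have ha : (0:ℝ) < ((a+1:ℕ):ℝ) := by positivity
      rw [Nat.cast_mul, div_le_div_iff₀ hn' (by positivity)]
      nlinarith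
  have h2 : Filter.limsup
      (fun k : ℕ => ENNReal.ofReal (Real.log (seqCoverCountOn f Set.univ id 𝒰 k) / k)) atTop ≤ topEntropy f := by
    unfold topEntropy seqEntropy seqEntropyOn
    exact le_iSup₂_of_le 𝒰 hU le_rfl
  have h3 := h1.trans h2
  rw [h0] at h3
  have := ENNReal.ofReal_pos.2 hpos
  exact absurd h3 (not_le.2 this)

lemma not_HS {X : Type*} [TopologicalSpace X] {f : X → X} {e : X → ℝ} {F : ℝ → ℝ}
    (he : Continuous e) (hinj : Function.Injective e) (hrange : ∀ z, F z ∈ Set.range e)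
    (hconj : ∀ n x, e (f^[n] x) = F^[n] (e x)) (h0 : topEntropy f = 0) : ¬ HS F := by
  rintro ⟨n, hn, K0, K1, h1, h2, h3, h4, h5, h6⟩
  let K : Bool → Set X := fun b => e ⁻¹' (if b then K1 else K0)
  have hr : ∀ z, F^[n] z ∈ Set.range e := by
    intro z
    obtain ⟨k, rfl⟩ : ∃ k, n = k+1 := ⟨n-1, by omega⟩
    rw [Function.iterate_succ_apply']; exact hrange _
  have hsub : K0 ∪ K1 ⊆ Set.range e := fun z hz => by
    obtain ⟨w, _, rfl⟩ := h5 hz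
    exact hr w
  have lift : ∀ L L' : Set ℝ, L ⊆ K0 ∪ K1 → L' ⊆ K0 ∪ K1 → L ⊆ F^[n] '' L' →
      e ⁻¹' L ⊆ f^[n] '' (e ⁻¹' L') := by
    intro L L' hL hL' h x hx
    obtain ⟨w, hw, hwx⟩ := h hx
    obtain ⟨y, rfl⟩ := hsub (hL' hw)
    refine ⟨y, hw, hinj ?_⟩
    rw [hconj, hwx]
  have hcov : ∀ b b', K b ⊆ f^[n] '' K b' := by
    intro b b'
    apply lift
    · cases b <;> simp
    · cases b' <;> simp
    · cases b <;> cases b' <;> simp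
      · exact subset_union_left.trans h5
      · exact subset_union_left.trans h6
      · exact subset_union_right.trans h5
      · exact subset_union_right.trans h6
  have hne0 : (K false).Nonempty := by
    obtain ⟨z, hz⟩ := h4
    obtain ⟨x, rfl⟩ := hsub (Or.inl hz)
    exact ⟨x, by simpa [K] using hz⟩
  have hne : ∀ b, (K b).Nonempty := by
    intro b
    obtain ⟨x, hx⟩ := hne0
    obtain ⟨y, hy, _⟩ := hcov false b hx
    exact ⟨y, hy⟩
  refine entropy_pos hn hne ?_ ?_ hcov h0
  · intro b; cases b
    · simpa [K] using h1.preimage he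
    · simpa [K] using h2.preimage he
  · simpa [K] using h3.preimage e

end SeqEnt

namespace SeqEnt

/-- omega limit points in metric form -/
def OmP {X : Type*} [MetricSpace X] (f : X → X) (c : X) : Prop :=
  ∃ x, ∀ ε > 0, ∀ N : ℕ, ∃ n ≥ N, dist (f^[n] x) c < ε

lemma OmP_periodic {X : Type*} [MetricSpace X] {f : X → X} {c : X} {p : ℕ} (hp : 1 ≤ p)
    (h : f^[p] c = c) : OmP f c := by
  refine ⟨c, fun ε hε N => ⟨p * N, by nlinarith, ?_⟩⟩
  rw [Function.iterate_mul, Function.iterate_fixed h]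
  simpa using hε

lemma omega_case1 {F : ℝ → ℝ} (hF : Continuous F) {c : ℝ}
    (h : ∀ δ > 0, ∃ n : ℕ, 1 ≤ n ∧ ∃ δ' > 0, Ioo (c - δ') c ⊆ F^[n] '' Ioo (c - δ) c) : OmP F c := by
  choose! ν hν d hd hsub using h
  let δ : ℕ → ℝ := fun k => Nat.rec 1 (fun _ r => min (d r) (r/2)) k
  have δs : ∀ k, δ (k+1) = min (d (δ k)) (δ k / 2) := fun k => rfl
  let M : ℕ → ℕ := fun k => Nat.rec 0 (fun j r => r + ν (δ j)) k
  have Ms : ∀ k, M (k+1) = M k + ν (δ k) := fun k => rfl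
  have δpos : ∀ k, 0 < δ k := by
    intro k
    induction k with
    | zero => exact one_pos
    | succ k ih => rw [δs]; exact lt_min (hd _ ih) (by linarith)
  have δle : ∀ k, δ k ≤ (1/2)^k := by
    intro k
    induction k with
    | zero => simp [δ]
    | succ k ih => rw [δs, pow_succ]; exact (min_le_right _ _).trans (by linarith)
  have Mge : ∀ k, k ≤ M k := by
    intro k
    induction k with
    | zero => exact Nat.zero_le _
    | succ k ih => rw [Ms]; have := hν _ (δpos k); omega
  have ex : ∀ k, ∀ w ∈ Ioo (c - δ k) c, ∃ x ∈ Ioo (c - 1) c, F^[M k] x = w ∧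
      ∀ j ≤ k, F^[M j] x ∈ Icc (c - δ j) c := by
    intro k
    induction k with
    | zero =>
      intro w hw
      refine ⟨w, hw, rfl, fun j hj => ?_⟩
      obtain rfl : j = 0 := by omega
      exact Ioo_subset_Icc_self hw
    | succ k ih =>
      intro w hw
      have hw' : w ∈ Ioo (c - d (δ k)) c := by
        refine ⟨?_, hw.2⟩
        have h1 := hw.1
        rw [δs] at h1
        linarith [min_le_left (d (δ k)) (δ k / 2)]
      obtain ⟨u, hu, huw⟩ := hsub _ (δpos k) hw'
      obtain ⟨x, hx, hxu, hxj⟩ := ih u hu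
      have hxw : F^[M (k+1)] x = w := by
        rw [Ms, add_comm, Function.iterate_add_apply, hxu, huw]
      refine ⟨x, hx, hxw, fun j hj => ?_⟩
      rcases Nat.lt_or_ge j (k+1) with h | h
      · exact hxj j (by omega)
      · obtain rfl : j = k+1 := by omega
        rw [hxw]; exact Ioo_subset_Icc_self hw
  let C : ℕ → Set ℝ := fun k => Icc (c-1) c ∩ ⋂ j ∈ Set.Iic k, F^[M j] ⁻¹' Icc (c - δ j) c
  have hCcl : ∀ k, IsClosed (C k) := fun k => isClosed_Icc.inter
    (isClosed_biInter fun j _ => isClosed_Icc.preimage (hF.iterate _))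
  have hne := IsCompact.nonempty_iInter_of_sequence_nonempty_isCompact_isClosed C
    (fun k => by
      rintro x ⟨hx, hx'⟩
      refine ⟨hx, ?_⟩
      simp only [Set.mem_iInter, Set.mem_Iic] at hx' ⊢
      exact fun j hj => hx' j (by omega))
    (fun k => by
      obtain ⟨x, hx, _, hxj⟩ := ex k (c - δ k / 2) ⟨by linarith [δpos k], by linarith [δpos k]⟩
      refine ⟨x, Ioo_subset_Icc_self hx, ?_⟩
      simp only [Set.mem_iInter, Set.mem_Iic]
      exact hxj)
    (isCompact_Icc.of_isClosed_subset (hCcl 0) (fun x hx => hx.1)) hCcl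
  obtain ⟨x, hx⟩ := hne
  have hxk : ∀ k, F^[M k] x ∈ Icc (c - δ k) c := by
    intro k
    have := (Set.mem_iInter.1 hx k).2
    simp only [Set.mem_iInter, Set.mem_Iic] at this
    exact this k le_rfl
  refine ⟨x, fun ε hε N => ?_⟩
  obtain ⟨k, hk⟩ := exists_pow_lt_of_lt_one hε (by norm_num : (1/2:ℝ) < 1)
  have hk' : ((1:ℝ)/2)^(max k N) ≤ (1/2)^k :=
    pow_le_pow_of_le_one (by norm_num) (by norm_num) (le_max_left _ _)
  refine ⟨M (max k N), (le_max_right k N).trans (Mge _), ?_⟩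
  have h1 := hxk (max k N)
  have h2 := δle (max k N)
  rw [Real.dist_eq, abs_lt]
  constructor <;> linarith [h1.1, h1.2]

lemma visits {F : ℝ → ℝ} {c η : ℝ} (h : ∃ z ∈ Ioo (c - η) c, OmP F z) {n : ℕ} (hn : 1 ≤ n) :
    ∃ y ∈ Ioo (c - η) c, ∃ j : ℕ, F^[n * (j+1)] y ∈ Ioo (c-η) c := by
  obtain ⟨z, hz, x, hx⟩ := h
  have hinf : {k : ℕ | F^[k] x ∈ Ioo (c-η) c}.Infinite := by
    rw [Set.infinite_iff_exists_gt]
    intro N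
    obtain ⟨k, hk, hd⟩ := hx (min (z - (c-η)) (c - z)) (lt_min (by linarith [hz.1]) (by linarith [hz.2])) (N+1)
    refine ⟨k, ?_, by omega⟩
    rw [Real.dist_eq, abs_lt] at hd
    have h1 := min_le_left (z - (c-η)) (c - z)
    have h2 := min_le_right (z - (c-η)) (c - z)
    exact ⟨by linarith [hd.1], by linarith [hd.2]⟩
  obtain ⟨k, hk, l, hl, hkl, hmod⟩ := hinf.exists_ne_map_eq_of_mapsTo (f := fun k => k % n)
    (t := Set.Iio n) (fun k _ => Nat.mod_lt k hn) (Set.finite_Iio n)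
  have main : ∀ k l : ℕ, F^[k] x ∈ Ioo (c-η) c → F^[l] x ∈ Ioo (c-η) c → k < l → k % n = l % n →
      ∃ y ∈ Ioo (c - η) c, ∃ j : ℕ, F^[n * (j+1)] y ∈ Ioo (c-η) c := by
    intro k l hk hl hkl hmod
    obtain ⟨j, hj⟩ := (Nat.modEq_iff_dvd' hkl.le).1 hmod
    have hj0 : j ≠ 0 := by rintro rfl; omega
    obtain ⟨i, rfl⟩ := Nat.exists_eq_succ_of_ne_zero hj0
    refine ⟨_, hk, i, ?_⟩
    rw [← Function.iterate_add_apply]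
    have : n * (i+1) + k = l := by rw [← Nat.succ_eq_add_one, ← hj]; omega
    rwa [this]
  rcases Nat.lt_or_gt_of_ne hkl with h | h
  · exact main k l hk hl h hmod
  · exact main l k hl hk h hmod.symm

lemma omega_left {F : ℝ → ℝ} (hF : Continuous F) {lo hi : ℝ} (hb : ∀ z, F z ∈ Icc lo hi) {c : ℝ}
    (h : ∀ δ > 0, ∃ z ∈ Ioo (c - δ) c, OmP F z) : OmP F c := by
  by_cases h1 : ∀ δ > 0, ∃ n : ℕ, 1 ≤ n ∧ ∃ δ' > 0, Ioo (c - δ') c ⊆ F^[n] '' Ioo (c - δ) c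
  · exact omega_case1 hF h1
  push Not at h1
  obtain ⟨δ0, hδ0, hbad⟩ := h1
  have star : ∀ n : ℕ, 1 ≤ n → ∀ u ∈ Ioo (c-δ0) c, F^[n] u < c → ∀ v ∈ Ioo (c-δ0) c, F^[n] v < c := by
    intro n hn u hu huc v hv
    by_contra hcon
    push Not at hcon
    apply hbad n hn (c - F^[n] u) (by linarith)
    have := isPreconnected_Ioo.intermediate_value hu hv (f := F^[n]) (hF.iterate n).continuousOn
    intro z hz
    exact this ⟨by linarith [hz.1], by linarith [hz.2]⟩
  obtain ⟨δ, hδe⟩ : ∃ δ, δ = δ0/2 := ⟨_, rfl⟩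
  have hδ : 0 < δ := by linarith
  have hWW : Ioo (c-δ) c ⊆ Ioo (c-δ0) c := Ioo_subset_Ioo_left (by linarith)
  obtain ⟨y, hy, j0, hj0⟩ := visits (h δ hδ) (n := 1) le_rfl
  rw [one_mul] at hj0
  obtain ⟨n, hne⟩ : ∃ n, n = j0 + 1 := ⟨_, rfl⟩
  rw [← hne] at hj0
  have hn : 1 ≤ n := by omega
  obtain ⟨g, hg⟩ : ∃ g, g = F^[n] := ⟨_, rfl⟩
  have hgc : Continuous g := hg ▸ hF.iterate n
  have hgy : g y ∈ Ioo (c-δ) c := by rw [hg]; exact hj0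
  have hgi : ∀ i, g^[i] = F^[n*i] := by intro i; rw [hg, Function.iterate_mul]
  have gb : ∀ z, lo ≤ g z := by
    intro z
    rw [hg, hne, Function.iterate_succ_apply']
    exact (hb _).1
  have hlt : ∀ i, ∀ v ∈ Ioo (c-δ0) c, g^[i] v < c := by
    intro i
    induction i with
    | zero => intro v hv; exact hv.2
    | succ i ih =>
      intro v hv
      have hy1 : g^[i+1] y < c := by
        rw [Function.iterate_succ_apply]; exact ih _ (hWW hgy)
      rw [hgi] at hy1 ⊢
      exact star _ (by nlinarith) y (hWW hy) hy1 v hv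
  obtain ⟨A, hA⟩ : ∃ A : Set ℝ, A = ⋃ i : ℕ, g^[i] '' Ioo (c-δ) c := ⟨_, rfl⟩
  have memA : ∀ z, z ∈ A ↔ ∃ i : ℕ, ∃ w ∈ Ioo (c-δ) c, g^[i] w = z := by
    intro z; rw [hA]; simp
  have hApre : IsPreconnected A := by
    rw [hA]
    apply IsPreconnected.iUnion_of_chain
    · intro i
      exact isPreconnected_Ioo.image _ (hgc.iterate i).continuousOn
    · intro i
      refine ⟨g^[i] (g y), ⟨g y, hgy, rfl⟩, ⟨y, hy, ?_⟩⟩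
      exact Function.iterate_succ_apply g i y
  have hAlt : ∀ z ∈ A, z < c := by
    intro z hz
    obtain ⟨i, w, hw, rfl⟩ := (memA z).1 hz
    exact hlt i w (hWW hw)
  have hWA : Ioo (c-δ) c ⊆ A := fun z hz => (memA z).2 ⟨0, z, hz, rfl⟩
  have hgA : ∀ z ∈ A, g z ∈ A := by
    intro z hz
    obtain ⟨i, w, hw, rfl⟩ := (memA z).1 hz
    exact (memA _).2 ⟨i+1, w, hw, Function.iterate_succ_apply' _ _ _⟩
  have hAW : ∀ z ∈ A, z ∈ Ioo (c-δ) c ∨ ∃ u ∈ A, g u = z := by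
    intro z hz
    obtain ⟨i, w, hw, rfl⟩ := (memA z).1 hz
    cases i with
    | zero => exact Or.inl hw
    | succ i => exact Or.inr ⟨g^[i] w, (memA _).2 ⟨i, w, hw, rfl⟩, (Function.iterate_succ_apply' _ _ _).symm⟩
  have hAbd : BddBelow A := by
    refine ⟨min lo (c-δ), fun z hz => ?_⟩
    rcases hAW z hz with h | ⟨u, _, rfl⟩
    · exact (min_le_right _ _).trans h.1.le
    · exact (min_le_left _ _).trans (gb u)
  have hAne : A.Nonempty := ⟨y, hWA hy⟩
  obtain ⟨a, ha⟩ : ∃ a, a = sInf A := ⟨_, rfl⟩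
  have haA : ∀ z ∈ A, a ≤ z := fun z hz => ha ▸ csInf_le hAbd hz
  have haδ : a ≤ c - δ := by
    apply le_of_forall_pos_le_add
    intro ε hε
    have := haA (c - δ + min ε (δ/2)) (hWA ⟨by linarith [lt_min hε (half_pos hδ)],
      by linarith [min_le_right ε (δ/2)]⟩)
    linarith [min_le_left ε (δ/2)]
  have hac : a < c := by linarith
  have hIA : Ioo a c ⊆ A := by
    intro z hz
    obtain ⟨u, hu, huz⟩ := exists_lt_of_csInf_lt hAne (ha ▸ hz.1)
    have hv : max z (c - δ/2) ∈ A := hWA ⟨lt_of_lt_of_le (by linarith) (le_max_right _ _),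
      max_lt hz.2 (by linarith)⟩
    exact hApre.Icc_subset hu hv ⟨huz.le, le_max_left _ _⟩
  have hclos : ∀ z ∈ Icc a c, z ∈ closure (Ioo a c) := by
    intro z hz; rw [closure_Ioo hac.ne]; exact hz
  have hgle : ∀ z ∈ Icc a c, g z ≤ c := by
    intro z hz
    have hcl : IsClosed {z | g z ≤ c} := isClosed_le hgc continuous_const
    exact hcl.closure_subset_iff.2 (fun w hw => (hAlt _ (hgA _ (hIA hw))).le) (hclos z hz)
  have hgge : ∀ z ∈ Icc a c, a ≤ g z := by
    intro z hz
    have hcl : IsClosed {z | a ≤ g z} := isClosed_le continuous_const hgc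
    exact hcl.closure_subset_iff.2 (fun w hw => haA _ (hgA _ (hIA hw))) (hclos z hz)
  have hAI : ∀ z ∈ A, z ∈ Icc a c := fun z hz => ⟨haA z hz, (hAlt z hz).le⟩
  obtain ⟨e, he, hmax⟩ := isCompact_Icc.exists_isMaxOn (nonempty_Icc.2 hac.le)
    (hgc.continuousOn (s := Icc a c))
  have hge : c ≤ g e := by
    apply le_of_forall_pos_le_add
    intro ε hε
    obtain ⟨w, hw, j, hj⟩ := visits (h (min ε δ) (lt_min hε hδ)) hn
    have hwA : w ∈ A := hWA ⟨by linarith [hw.1, min_le_right ε δ], hw.2⟩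
    have hjA : g^[j] w ∈ A := by
      clear hj
      induction j with
      | zero => exact hwA
      | succ j ih => rw [Function.iterate_succ_apply']; exact hgA _ ih
    rw [← hgi, Function.iterate_succ_apply'] at hj
    have : g (g^[j] w) ≤ g e := hmax (hAI _ hjA)
    linarith [hj.1, min_le_left ε δ]
  have hgec : g e = c := le_antisymm (hgle e he) hge
  rcases he.2.lt_or_eq with hec | hec
  swap
  · rw [hec, hg] at hgec
    exact OmP_periodic hn hgec
  rcases he.1.lt_or_eq with hae | hae
  · have := hAlt _ (hgA _ (hIA ⟨hae, hec⟩))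
    linarith
  subst hae
  have haδ' : a < c - δ := by
    rcases haδ.lt_or_eq with h | h
    · exact h
    · have := hlt 1 a ⟨by linarith, hac⟩
      simp only [Function.iterate_one] at this
      linarith
  have haN : a ∉ A := fun h => by
    have := hAlt _ (hgA _ h)
    linarith
  obtain ⟨e', he', hmin⟩ := isCompact_Icc.exists_isMinOn (nonempty_Icc.2 hac.le)
    (hgc.continuousOn (s := Icc a c))
  have hge' : g e' ≤ a := by
    apply le_of_forall_pos_le_add
    intro ε hε
    obtain ⟨u, hu, hua⟩ := exists_lt_of_csInf_lt hAne (show sInf A < min (a + ε) (c-δ) from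
      ha ▸ lt_min (by linarith) haδ')
    have h1 := min_le_left (a+ε) (c-δ)
    have h2 := min_le_right (a+ε) (c-δ)
    rcases hAW u hu with h | ⟨w, hw, rfl⟩
    · linarith [h.1]
    · have : g e' ≤ g w := hmin (hAI _ hw)
      linarith
  have hgea : g e' = a := le_antisymm hge' (hgge e' he')
  rcases he'.2.lt_or_eq with hec' | hec'
  swap
  · rw [hec'] at hgea
    refine OmP_periodic (p := n*2) (by omega) ?_
    rw [← hgi]
    show g (g c) = c
    rw [hgea, hgec]
  rcases he'.1.lt_or_eq with hae' | hae'
  · exact absurd (hgea ▸ hgA _ (hIA ⟨hae', hec'⟩)) haN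
  · rw [← hae'] at hgea
    linarith

lemma refl_OmP {F : ℝ → ℝ} {c : ℝ} (h : OmP F c) : OmP (refl F) (-c) := by
  obtain ⟨x, hx⟩ := h
  refine ⟨-x, fun ε hε N => ?_⟩
  obtain ⟨n, hn, hd⟩ := hx ε hε N
  refine ⟨n, hn, ?_⟩
  rw [refl_iter, neg_neg]
  simpa using hd

lemma refl_refl (F : ℝ → ℝ) : refl (refl F) = F := by
  funext z; simp [refl]

lemma omega_closed_real {F : ℝ → ℝ} (hF : Continuous F) {lo hi : ℝ} (hb : ∀ z, F z ∈ Icc lo hi)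
    {c : ℝ} (h : ∀ δ > 0, ∃ z, dist z c < δ ∧ OmP F z) : OmP F c := by
  by_contra hc
  have hL : ¬ ∀ δ > 0, ∃ z ∈ Ioo (c - δ) c, OmP F z := fun h' => hc (omega_left hF hb h')
  have hR : ¬ ∀ δ > 0, ∃ z ∈ Ioo (-c - δ) (-c), OmP (refl F) z := by
    intro h'
    have := omega_left (F := refl F) (lo := -hi) (hi := -lo) (hF.comp continuous_neg).neg
      (fun z => by
        have := hb (-z)
        simp only [refl]
        exact ⟨by linarith [this.2], by linarith [this.1]⟩) h'
    have := refl_OmP this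
    rw [refl_refl, neg_neg] at this
    exact hc this
  push Not at hL hR
  obtain ⟨δ1, h1, h1'⟩ := hL
  obtain ⟨δ2, h2, h2'⟩ := hR
  obtain ⟨z, hz, hzo⟩ := h (min δ1 δ2) (lt_min h1 h2)
  rw [Real.dist_eq, abs_lt] at hz
  have m1 := min_le_left δ1 δ2
  have m2 := min_le_right δ1 δ2
  rcases lt_trichotomy z c with hlt | rfl | hgt
  · exact h1' z ⟨by linarith [hz.1], hlt⟩ hzo
  · exact hc hzo
  · exact h2' (-z) ⟨by linarith [hz.2], by linarith⟩ (refl_OmP hzo)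

end SeqEnt

namespace SeqEnt

section sets
variable {X : Type*} [MetricSpace X] {f : X → X}

lemma mem_omega_iff {c : X} : c ∈ omegaSet f ↔ OmP f c := by
  unfold omegaSet omegaLimitSet OmP
  simp only [Set.mem_iUnion, Set.mem_iInter, Metric.mem_closure_iff, Set.mem_image, Set.mem_Ici]
  constructor
  · rintro ⟨x, hx⟩
    refine ⟨x, fun ε hε N => ?_⟩
    obtain ⟨b, ⟨n, hn, rfl⟩, hd⟩ := hx N ε hε
    exact ⟨n, hn, by rwa [dist_comm]⟩
  · rintro ⟨x, hx⟩
    refine ⟨x, fun N ε hε => ?_⟩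
    obtain ⟨n, hn, hd⟩ := hx ε hε N
    exact ⟨_, ⟨n, hn, rfl⟩, by rwa [dist_comm]⟩

lemma orbit_tg {δ : ℝ} (hδ : 0 < δ) (z : X) (n : ℕ) :
    Relation.TransGen (fun u v => dist (f u) v < δ) z (f^[n+1] z) := by
  induction n with
  | zero => exact .single (by simpa using hδ)
  | succ n ih => exact ih.tail (by rw [Function.iterate_succ_apply' f (n+1)]; simpa using hδ)

lemma OmP_CRp (hf : UniformContinuous f) {c : X} (h : OmP f c) : CRp f c := by
  intro ε hε
  obtain ⟨δ, hδ, H⟩ := perturb hf hε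
  obtain ⟨x, hx⟩ := h
  obtain ⟨n, _, hn⟩ := hx δ hδ 0
  obtain ⟨m, hm, hm'⟩ := hx δ hδ (n+1)
  refine H c _ _ c (by rwa [dist_comm]) hm' (?_ : Relation.TransGen _ (f^[n] x) (f^[m] x))
  obtain ⟨k, rfl⟩ : ∃ k, m = (k+1) + n := ⟨m - n - 1, by omega⟩
  rw [Function.iterate_add_apply]
  exact orbit_tg hδ _ _

lemma NW_CRp (hf : UniformContinuous f) {c : X} (h : c ∈ nonWanderingSet f) : CRp f c := by
  intro ε hε
  obtain ⟨δ, hδ, H⟩ := perturb hf hε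
  obtain ⟨n, hn, z, hz1, hz2⟩ := h (Metric.ball c δ) Metric.isOpen_ball (Metric.mem_ball_self hδ)
  obtain ⟨k, rfl⟩ : ∃ k, n = k+1 := ⟨n-1, by omega⟩
  exact H c z _ c (by rw [dist_comm]; exact hz2) hz1 (orbit_tg hδ z k)

lemma CR_closed (hf : UniformContinuous f) : IsClosed (chainRecurrentSet f) := by
  apply isClosed_of_closure_subset
  intro x hx
  rw [mem_CR_iff]
  intro ε hε
  obtain ⟨δ, hδ, H⟩ := perturb hf hε
  obtain ⟨b, hb, hd⟩ := Metric.mem_closure_iff.1 hx δ hδ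
  exact H x b b x hd (by rwa [dist_comm]) (mem_CR_iff.1 hb δ hδ)

lemma NW_closed : IsClosed (nonWanderingSet f) := by
  apply isClosed_of_closure_subset
  intro x hx U hU hxU
  obtain ⟨z, hz, hz'⟩ := mem_closure_iff.1 hx U hU hxU
  exact hz' U hU hz

lemma NW_maps (hf : Continuous f) : MapsTo f (nonWanderingSet f) (nonWanderingSet f) := by
  intro x hx U hU hxU
  obtain ⟨n, hn, z, hz1, hz2⟩ := hx (f ⁻¹' U) (hU.preimage hf) hxU
  refine ⟨n, hn, f z, ?_, hz2⟩
  have : f (f^[n] z) ∈ U := hz1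
  rw [← Function.iterate_succ_apply' f n z, Function.iterate_succ_apply] at this
  exact this

lemma OmP_map (hf : UniformContinuous f) {c : X} (h : OmP f c) : OmP f (f c) := by
  obtain ⟨x, hx⟩ := h
  refine ⟨x, fun ε hε N => ?_⟩
  obtain ⟨δ, hδ, H⟩ := Metric.uniformContinuous_iff.1 hf ε hε
  obtain ⟨n, hn, hd⟩ := hx δ hδ N
  refine ⟨n+1, by omega, ?_⟩
  rw [Function.iterate_succ_apply']
  exact H hd

lemma CRp_transport {e : X → ℝ} {F : ℝ → ℝ} (he : UniformContinuous e)
    (hconj : ∀ x, e (f x) = F (e x)) {x : X} (hx : CRp f x) : CRp F (e x) := by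
  intro ε hε
  obtain ⟨δ, hδ, H⟩ := Metric.uniformContinuous_iff.1 he ε hε
  refine Relation.TransGen.lift e ?_ _ _ (hx δ hδ)
  intro a b h
  show dist (F (e a)) (e b) < ε
  rw [← hconj]
  exact H h

lemma OmP_transport {e : X → ℝ} {F : ℝ → ℝ} (he : UniformContinuous e)
    (hconj : ∀ n x, e (f^[n] x) = F^[n] (e x)) {c : X} (h : OmP f c) : OmP F (e c) := by
  obtain ⟨x, hx⟩ := h
  refine ⟨e x, fun ε hε N => ?_⟩
  obtain ⟨δ, hδ, H⟩ := Metric.uniformContinuous_iff.1 he ε hε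
  obtain ⟨n, hn, hd⟩ := hx δ hδ N
  refine ⟨n, hn, ?_⟩
  rw [← hconj]
  exact H hd

lemma OmP_back {e : X → ℝ} {F : ℝ → ℝ} (hrange : ∀ z, F z ∈ Set.range e)
    (hinv : ∀ δ > 0, ∃ η > 0, ∀ x y, |e x - e y| < η → dist x y < δ)
    (hconj : ∀ n x, e (f^[n] x) = F^[n] (e x)) {c : X} (h : OmP F (e c)) : OmP f c := by
  obtain ⟨x, hx⟩ := h
  obtain ⟨x0, hx0⟩ := hrange x
  refine ⟨x0, fun ε hε N => ?_⟩
  obtain ⟨η, hη, H⟩ := hinv ε hε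
  obtain ⟨n, hn, hd⟩ := hx η hη (N+1)
  obtain ⟨k, rfl⟩ : ∃ k, n = k+1 := ⟨n-1, by omega⟩
  refine ⟨k, by omega, H _ _ ?_⟩
  rw [Function.iterate_succ_apply, ← hx0, ← hconj, Real.dist_eq] at hd
  exact hd

lemma omega_closed {e : X → ℝ} {F : ℝ → ℝ} (he : UniformContinuous e) (hF : Continuous F)
    {lo hi : ℝ} (hb : ∀ z, F z ∈ Icc lo hi) (hrange : ∀ z, F z ∈ Set.range e)
    (hinv : ∀ δ > 0, ∃ η > 0, ∀ x y, |e x - e y| < η → dist x y < δ)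
    (hconj : ∀ n x, e (f^[n] x) = F^[n] (e x)) : IsClosed (omegaSet f) := by
  apply isClosed_of_closure_subset
  intro c hc
  rw [mem_omega_iff]
  refine OmP_back hrange hinv hconj (omega_closed_real hF hb ?_)
  intro ε hε
  obtain ⟨δ, hδ, H⟩ := Metric.uniformContinuous_iff.1 he ε hε
  obtain ⟨b, hb', hd⟩ := Metric.mem_closure_iff.1 hc δ hδ
  exact ⟨e b, H (by rwa [dist_comm]), OmP_transport he hconj (mem_omega_iff.1 hb')⟩

end sets

end SeqEnt

/-- A zero topological entropy continuous interval map has zero topological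
sequence entropy when restricted to its ω-limit set, its non-wandering set and its chain
recurrent set. -/
theorem seqEntropy_interval_restrictions_eq_zero {X : Type*} [MetricSpace X]
    (hX : Nonempty (X ≃ₜ Set.Icc (0 : ℝ) 1)) (f : X → X) (hf : Continuous f)
    (h0 : topEntropy f = 0) :
    supSeqEntropyOn f (omegaSet f) = 0 ∧ supSeqEntropyOn f (nonWanderingSet f) = 0 ∧
      supSeqEntropyOn f (chainRecurrentSet f) = 0 := by
  obtain ⟨φ⟩ := hX
  haveI : CompactSpace X := φ.symm.compactSpace
  have hfu : UniformContinuous f := CompactSpace.uniformContinuous_of_continuous hf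
  let e : X → ℝ := fun x => (φ x : ℝ)
  have hec : Continuous e := continuous_subtype_val.comp φ.continuous
  have he : UniformContinuous e := CompactSpace.uniformContinuous_of_continuous hec
  have hinj : Function.Injective e := Subtype.val_injective.comp φ.injective
  let G : Set.Icc (0:ℝ) 1 → ℝ := fun z => e (f (φ.symm z))
  have hG : UniformContinuous G := CompactSpace.uniformContinuous_of_continuous
    (hec.comp (hf.comp φ.symm.continuous))
  let F : ℝ → ℝ := fun z => G (Set.projIcc 0 1 zero_le_one z)
  have hF : UniformContinuous F := hG.comp (LipschitzWith.projIcc zero_le_one).uniformContinuous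
  have he01 : ∀ x, e x ∈ Set.Icc (0:ℝ) 1 := fun x => (φ x).2
  have hrange : ∀ z, F z ∈ Set.range e := fun z => ⟨_, rfl⟩
  have hb : ∀ z, F z ∈ Set.Icc (0:ℝ) 1 := fun z => he01 _
  have hconj1 : ∀ x, e (f x) = F (e x) := by
    intro x
    show e (f x) = e (f (φ.symm (Set.projIcc 0 1 zero_le_one (φ x : ℝ))))
    rw [Set.projIcc_val, Homeomorph.symm_apply_apply]
  have hconj : ∀ n x, e (f^[n] x) = F^[n] (e x) := by
    intro n
    induction n with
    | zero => intro x; rfl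
    | succ n ih => intro x; rw [Function.iterate_succ_apply, ih, hconj1, Function.iterate_succ_apply]
  have hinv : ∀ δ > 0, ∃ η > 0, ∀ x y, |e x - e y| < η → dist x y < δ := by
    intro δ hδ
    obtain ⟨η, hη, H⟩ := Metric.uniformContinuous_iff.1
      (CompactSpace.uniformContinuous_of_continuous φ.symm.continuous) δ hδ
    refine ⟨η, hη, fun x y hxy => ?_⟩
    have := H (a := φ x) (b := φ y) (by rw [Subtype.dist_eq, Real.dist_eq]; exact hxy)
    simpa using this
  have hS : ¬ SeqEnt.HS F := SeqEnt.not_HS hec hinj hrange hconj h0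
  have key : ∀ Y : Set X, IsClosed Y → MapsTo f Y Y → (∀ x ∈ Y, SeqEnt.CRp f x) →
      supSeqEntropyOn f Y = 0 := by
    intro Y hY hYf hCR
    unfold supSeqEntropyOn
    simp only [ENNReal.iSup_eq_zero]
    intro a ha _
    apply SeqEnt.entropy_zero_of_count
    intro 𝒰 hU
    exact SeqEnt.count_le hF hb hS hconj he01 hinv hY.isCompact hYf
      (fun x hx => SeqEnt.CRp_transport he hconj1 (hCR x hx)) ha hU
  refine ⟨key _ (SeqEnt.omega_closed he hF.continuous hb hrange hinv hconj) ?_ ?_,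
    key _ SeqEnt.NW_closed (SeqEnt.NW_maps hf) (fun x hx => SeqEnt.NW_CRp hfu hx),
    key _ (SeqEnt.CR_closed hfu) ?_ (fun x hx => SeqEnt.mem_CR_iff.1 hx)⟩
  · intro x hx
    exact SeqEnt.mem_omega_iff.2 (SeqEnt.OmP_map hfu (SeqEnt.mem_omega_iff.1 hx))
  · intro x hx
    exact SeqEnt.OmP_CRp hfu (SeqEnt.mem_omega_iff.1 hx)
  · intro x hx
    exact SeqEnt.mem_CR_iff.2 (SeqEnt.CRp_map hfu (SeqEnt.mem_CR_iff.1 hx))
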